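/- arXiv:2603.27559 — 5 statements merged into one kernel-verified Lean document; each statement's English description precedes it below -/
import Mathlib

section
/- Let V and W be finite vertex types, and let G be a digraph on V and H a digraph on W. Then there exist bijections α, β : V ≃ W such that for all u, v ∈ V, (u,v) is an arc of G if and only if (α(u), β(v)) is an arc of H, if and only if the alternating double covers ADC(G) and ADC(H) are isomorphic as digraphs, i.e., there exists a bijection e : V × Bool ≃ W × Bool such that for all x, y, (x,y) is an arc of ADC(G) if and only if (e(x), e(y)) is an arc of ADC(H). -/
/-- The alternating double cover of a digraph (arbitrary relation) `r` on `V`: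
arcs run from `(u, false)` to `(v, true)` exactly when `(u,v)` is an arc of `r`. -/
def ADC {V : Type*} (r : V → V → Prop) : V × Bool → V × Bool → Prop :=
  fun x y => r x.1 y.1 ∧ x.2 = false ∧ y.2 = true

theorem extend_aux {V W : Type*} [Fintype V] [Fintype W]
    (hc : Fintype.card V = Fintype.card W) (S : Set V) (f : V → W) (hf : Set.InjOn f S) :
    ∃ g : V ≃ W, ∀ u ∈ S, g u = f u := by
  classical
  obtain ⟨g, hg⟩ := Set.MapsTo.exists_equiv_extend_of_card_eq (t := (Finset.univ : Finset W))
    (s := S) (f := f) (by simpa using hc) (fun _ _ => by simp) hf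
  exact ⟨g.trans (Equiv.subtypeUnivEquiv (by simp)), fun u hu => hg u hu⟩

/-- Two digraphs are TF-isomorphic iff their alternating double covers are isomorphic. -/
theorem tf_isomorphic_iff_adc_iso {V W : Type*} [Fintype V] [Fintype W]
    (rG : V → V → Prop) (rH : W → W → Prop) :
    (∃ α β : V ≃ W, ∀ u v : V, rG u v ↔ rH (α u) (β v)) ↔
      (∃ e : V × Bool ≃ W × Bool, ∀ x y : V × Bool, ADC rG x y ↔ ADC rH (e x) (e y)) := by
  constructor
  · rintro ⟨α, β, h⟩
    refine ⟨⟨fun x => (bif x.2 then β x.1 else α x.1, x.2),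
      fun x => (bif x.2 then β.symm x.1 else α.symm x.1, x.2), ?_, ?_⟩, ?_⟩
    · rintro ⟨x, _ | _⟩ <;> simp
    · rintro ⟨x, _ | _⟩ <;> simp
    · rintro ⟨x, _ | _⟩ ⟨y, _ | _⟩ <;> simp [ADC, h]
  · rintro ⟨e, he⟩
    have hc : Fintype.card V = Fintype.card W := by
      have := Fintype.card_congr e
      simpa using this
    have key : ∀ u v, rG u v → rH (e (u, false)).1 (e (v, true)).1 ∧
        (e (u, false)).2 = false ∧ (e (v, true)).2 = true := fun u v h =>
      (he (u, false) (v, true)).1 ⟨h, rfl, rfl⟩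
    have key2 : ∀ a b, rH a b → ∃ u v, rG u v ∧ e (u, false) = (a, false) ∧
        e (v, true) = (b, true) := by
      intro a b h
      have h1 := (he (e.symm (a, false)) (e.symm (b, true))).2 (by
        simp only [Equiv.apply_symm_apply]
        exact ⟨h, rfl, rfl⟩)
      obtain ⟨h1, h2, h3⟩ := h1
      refine ⟨_, _, h1, ?_, ?_⟩
      · exact (e.eq_symm_apply).1 (Prod.ext rfl h2.symm)
      · exact (e.eq_symm_apply).1 (Prod.ext rfl h3.symm)
    obtain ⟨α, hα⟩ := extend_aux hc {u | ∃ v, rG u v} (fun u => (e (u, false)).1) (by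
      rintro u ⟨v, h⟩ u' ⟨v', h'⟩ heq
      have := e.injective (Prod.ext heq ((key u v h).2.1.trans (key u' v' h').2.1.symm))
      exact congrArg Prod.fst this)
    obtain ⟨β, hβ⟩ := extend_aux hc {v | ∃ u, rG u v} (fun v => (e (v, true)).1) (by
      rintro v ⟨u, h⟩ v' ⟨u', h'⟩ heq
      have := e.injective (Prod.ext heq ((key u v h).2.2.trans (key u' v' h').2.2.symm))
      exact congrArg Prod.fst this)
    refine ⟨α, β, fun u v => ⟨fun h => ?_, fun h => ?_⟩⟩
    · rw [hα u ⟨v, h⟩, hβ v ⟨u, h⟩]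
      exact (key u v h).1
    · obtain ⟨u', v', h', h1, h2⟩ := key2 _ _ h
      have e1 := hα u' ⟨v', h'⟩
      have e2 := hβ v' ⟨u', h'⟩
      simp only [h1, h2] at e1 e2
      rw [← α.injective e1, ← β.injective e2]
      exact h'
end

section
/- For every natural number n ≥ 1, the claw graph CG(n) and its companion CG'(n) are TF-cousins if and only if n is odd. That is: there exist bijections α, β between the vertex sets such that for all vertices x, y, x and y are adjacent in CG'(n) if and only if α(x) and β(y) are adjacent in CG(n), and moreover CG(n) and CG'(n) are not isomorphic, if and only if n is odd. -/
/-- Vertices of the claw graph `CG(n)`: circuit vertices indexed by `ZMod (6n)`,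
leaves indexed by `Fin n × Fin 3`, and centres indexed by `Fin n`. -/
inductive ClawVert (n : ℕ) : Type
  | circ : ZMod (6 * n) → ClawVert n
  | leaf : Fin n → Fin 3 → ClawVert n
  | centre : Fin n → ClawVert n
  deriving DecidableEq

/-- Edge relation (before symmetrization) for the claw graph `CG(n)`:
a cycle `C_{6n}` on the circuit vertices, claw edges `c_i ~ ℓ_{i,j}`, and leaf
`ℓ_{i,j}` joined to the antipodal pair `u_{i+jn}`, `u_{i+jn+3n}`. -/
def cgRel (n : ℕ) : ClawVert n → ClawVert n → Prop
  | .circ m, .circ m' => m' = m + 1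
  | .centre i, .leaf i' _ => i = i'
  | .leaf i j, .circ m =>
      m = ((i : ℕ) : ZMod (6 * n)) + ((j : ℕ) : ZMod (6 * n)) * ((n : ℕ) : ZMod (6 * n)) ∨
      m = ((i : ℕ) : ZMod (6 * n)) + ((j : ℕ) : ZMod (6 * n)) * ((n : ℕ) : ZMod (6 * n))
            + ((3 * n : ℕ) : ZMod (6 * n))
  | _, _ => False

/-- The claw graph `CG(n)`. -/
def CG (n : ℕ) : SimpleGraph (ClawVert n) := SimpleGraph.fromRel (cgRel n)

/-- Edge relation (before symmetrization) for the companion `CG'(n)`: the same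
claw and leaf edges, but the circuit `C_{6n}` is replaced by two disjoint copies
of `C_{3n}`: writing a circuit index as `s·3n + a` with `0 ≤ a < 3n`,
`u_{s·3n+a} ~ u_{s'·3n+a'}` iff `s = s'` and `a' ≡ a ± 1 (mod 3n)`. -/
def cgRel' (n : ℕ) : ClawVert n → ClawVert n → Prop
  | .circ m, .circ m' =>
      m.val / (3 * n) = m'.val / (3 * n) ∧
      m'.val % (3 * n) = (m.val % (3 * n) + 1) % (3 * n)
  | .centre i, .leaf i' _ => i = i'
  | .leaf i j, .circ m =>
      m = ((i : ℕ) : ZMod (6 * n)) + ((j : ℕ) : ZMod (6 * n)) * ((n : ℕ) : ZMod (6 * n)) ∨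
      m = ((i : ℕ) : ZMod (6 * n)) + ((j : ℕ) : ZMod (6 * n)) * ((n : ℕ) : ZMod (6 * n))
            + ((3 * n : ℕ) : ZMod (6 * n))
  | _, _ => False

/-- The companion claw graph `CG'(n)`. -/
def CG' (n : ℕ) : SimpleGraph (ClawVert n) := SimpleGraph.fromRel (cgRel' n)

theorem aux_val_cast (n k : ℕ) : ((k : ZMod (6 * n))).val = k % (6 * n) := ZMod.val_natCast _ _

theorem aux_modmod (n k : ℕ) : k % (6 * n) % (3 * n) = k % (3 * n) :=
  Nat.mod_mod_of_dvd k ⟨2, by ring⟩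

theorem aux_eq_iff (n : ℕ) (hn : 1 ≤ n) (m m' : ZMod (6 * n)) :
    m.val % (3 * n) = m'.val % (3 * n) ↔ m = m' ∨ m = m' + ((3 * n : ℕ) : ZMod (6 * n)) := by
  have : NeZero (6 * n) := ⟨by omega⟩
  constructor
  · intro h
    have h1 := Nat.div_add_mod m.val (3 * n)
    have h2 := Nat.div_add_mod m'.val (3 * n)
    have b1 := ZMod.val_lt m
    have b2 := ZMod.val_lt m'
    have d1 : m.val / (3 * n) < 2 := Nat.div_lt_of_lt_mul (by omega)
    have d2 : m'.val / (3 * n) < 2 := Nat.div_lt_of_lt_mul (by omega)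
    have e1 := ZMod.natCast_zmod_val m
    have e2 := ZMod.natCast_zmod_val m'
    have z : ((3 * n : ℕ) : ZMod (6 * n)) + ((3 * n : ℕ) : ZMod (6 * n)) = 0 := by
      rw [← Nat.cast_add, ← ZMod.natCast_self (6 * n)]; congr 1; ring
    generalize m.val / (3 * n) = q1 at *
    generalize m'.val / (3 * n) = q2 at *
    rw [← e1, ← e2, ← h1, ← h2, h]
    generalize m'.val % (3 * n) = r
    have : (q1 = 0 ∨ q1 = 1) ∧ (q2 = 0 ∨ q2 = 1) := by omega
    obtain ⟨rfl | rfl, rfl | rfl⟩ := this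
    · left; rfl
    · right
      simp only [Nat.mul_zero, Nat.mul_one, Nat.zero_add, Nat.cast_add]
      linear_combination -z
    · right
      simp only [Nat.mul_zero, Nat.mul_one, Nat.zero_add, Nat.cast_add]
      ring
    · left; rfl
  · rintro (rfl | rfl)
    · rfl
    · rw [ZMod.val_add, aux_val_cast, aux_modmod, Nat.add_mod, aux_modmod]
      simp

theorem aux_dbl (n : ℕ) : ((3 * n : ℕ) : ZMod (6 * n)) + ((3 * n : ℕ) : ZMod (6 * n)) = 0 := by
  rw [← Nat.cast_add, ← ZMod.natCast_self (6 * n)]; congr 1; ring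

theorem aux_ij (n : ℕ) (i : Fin n) (j : Fin 3) : (i : ℕ) + j * n < 3 * n := by
  have := i.2; have := j.2
  have : (j : ℕ) * n ≤ 2 * n := Nat.mul_le_mul_right _ (by omega)
  omega

theorem aux_leaf (n : ℕ) (hn : 1 ≤ n) (i : Fin n) (j : Fin 3) (m : ZMod (6 * n)) :
    (m = ((i : ℕ) : ZMod (6 * n)) + ((j : ℕ) : ZMod (6 * n)) * ((n : ℕ) : ZMod (6 * n)) ∨
      m = ((i : ℕ) : ZMod (6 * n)) + ((j : ℕ) : ZMod (6 * n)) * ((n : ℕ) : ZMod (6 * n))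
            + ((3 * n : ℕ) : ZMod (6 * n))) ↔ m.val % (3 * n) = i + j * n := by
  have h := aux_ij n i j
  rw [← aux_eq_iff n hn]
  rw [← Nat.cast_mul, ← Nat.cast_add, aux_val_cast, aux_modmod, Nat.mod_eq_of_lt h]

/-- successor relation in the companion -/
def auxR (n : ℕ) (m m' : ZMod (6 * n)) : Prop :=
  m.val / (3 * n) = m'.val / (3 * n) ∧ m'.val % (3 * n) = (m.val % (3 * n) + 1) % (3 * n)

theorem auxR_irr (n : ℕ) (hn : 1 ≤ n) (m : ZMod (6 * n)) : ¬ auxR n m m := by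
  rintro ⟨-, h⟩
  have := Nat.mod_lt m.val (show 0 < 3 * n by omega)
  by_cases c : m.val % (3 * n) + 1 < 3 * n
  · rw [Nat.mod_eq_of_lt c] at h; omega
  · have : m.val % (3 * n) + 1 = 3 * n := by omega
    rw [this, Nat.mod_self] at h; omega

theorem aux_one (n : ℕ) (k : ℕ) (h0 : 0 < k) (h : k < 6 * n) :
    ((k : ℕ) : ZMod (6 * n)) ≠ 0 := by
  intro e
  rw [ZMod.natCast_eq_zero_iff] at e
  exact absurd (Nat.le_of_dvd h0 e) (by omega)


theorem cg_cc (n : ℕ) (hn : 1 ≤ n) (m m' : ZMod (6 * n)) :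
    (CG n).Adj (.circ m) (.circ m') ↔ m' = m + 1 ∨ m = m' + 1 := by
  have := aux_one n 1 (by omega) (by omega)
  simp only [CG, SimpleGraph.fromRel_adj, cgRel, ne_eq, ClawVert.circ.injEq]
  constructor
  · exact fun h => h.2
  · intro h
    refine ⟨?_, h⟩
    rintro rfl
    simp at h this
    exact this h

theorem cg'_cc (n : ℕ) (hn : 1 ≤ n) (m m' : ZMod (6 * n)) :
    (CG' n).Adj (.circ m) (.circ m') ↔ auxR n m m' ∨ auxR n m' m := by
  simp only [CG', SimpleGraph.fromRel_adj, cgRel', ne_eq, ClawVert.circ.injEq]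
  constructor
  · exact fun h => h.2
  · intro h
    refine ⟨?_, h⟩
    rintro rfl
    exact auxR_irr n hn m (by tauto)

theorem cg_lc (n : ℕ) (hn : 1 ≤ n) (i j) (m : ZMod (6 * n)) :
    (CG n).Adj (.leaf i j) (.circ m) ↔ m.val % (3 * n) = i + j * n := by
  rw [← aux_leaf n hn]
  simp [CG, SimpleGraph.fromRel_adj, cgRel]

theorem cg'_lc (n : ℕ) (hn : 1 ≤ n) (i j) (m : ZMod (6 * n)) :
    (CG' n).Adj (.leaf i j) (.circ m) ↔ m.val % (3 * n) = i + j * n := by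
  rw [← aux_leaf n hn]
  simp [CG', SimpleGraph.fromRel_adj, cgRel']

theorem cg_cl (n : ℕ) (hn : 1 ≤ n) (i j) (m : ZMod (6 * n)) :
    (CG n).Adj (.circ m) (.leaf i j) ↔ m.val % (3 * n) = i + j * n := by
  rw [SimpleGraph.adj_comm, cg_lc n hn]

theorem cg'_cl (n : ℕ) (hn : 1 ≤ n) (i j) (m : ZMod (6 * n)) :
    (CG' n).Adj (.circ m) (.leaf i j) ↔ m.val % (3 * n) = i + j * n := by
  rw [SimpleGraph.adj_comm, cg'_lc n hn]

theorem cg_ll (n i j i' j') : ¬ (CG n).Adj (.leaf i j) (.leaf i' j') := by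
  simp [CG, SimpleGraph.fromRel_adj, cgRel]
theorem cg'_ll (n i j i' j') : ¬ (CG' n).Adj (.leaf i j) (.leaf i' j') := by
  simp [CG', SimpleGraph.fromRel_adj, cgRel']
theorem cg_tt (n i i') : ¬ (CG n).Adj (.centre i) (.centre i') := by
  simp [CG, SimpleGraph.fromRel_adj, cgRel]
theorem cg'_tt (n i i') : ¬ (CG' n).Adj (.centre i) (.centre i') := by
  simp [CG', SimpleGraph.fromRel_adj, cgRel']
theorem cg_ct (n m i) : ¬ (CG n).Adj (.circ m) (.centre i) := by
  simp [CG, SimpleGraph.fromRel_adj, cgRel]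
theorem cg'_ct (n m i) : ¬ (CG' n).Adj (.circ m) (.centre i) := by
  simp [CG', SimpleGraph.fromRel_adj, cgRel']
theorem cg_tc (n m i) : ¬ (CG n).Adj (.centre i) (.circ m) := by
  simp [CG, SimpleGraph.fromRel_adj, cgRel]
theorem cg'_tc (n m i) : ¬ (CG' n).Adj (.centre i) (.circ m) := by
  simp [CG', SimpleGraph.fromRel_adj, cgRel']
theorem cg_tl (n i j i') : (CG n).Adj (.centre i') (.leaf i j) ↔ i' = i := by
  simp [CG, SimpleGraph.fromRel_adj, cgRel]
theorem cg'_tl (n i j i') : (CG' n).Adj (.centre i') (.leaf i j) ↔ i' = i := by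
  simp [CG', SimpleGraph.fromRel_adj, cgRel']
theorem cg_lt (n i j i') : (CG n).Adj (.leaf i j) (.centre i') ↔ i' = i := by
  simp [CG, SimpleGraph.fromRel_adj, cgRel]
theorem cg'_lt (n i j i') : (CG' n).Adj (.leaf i j) (.centre i') ↔ i' = i := by
  simp [CG', SimpleGraph.fromRel_adj, cgRel']

/-- the twisting map on circuit indices -/
def auxPhi (n : ℕ) (m : ZMod (6 * n)) : ZMod (6 * n) :=
  ((m.val % (3 * n) + 3 * n * (m.val % (3 * n) + m.val / (3 * n)) : ℕ) : ZMod (6 * n))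

theorem aux_crt (n : ℕ) (ho : Odd n) (a b : ℕ) :
    ((a : ℕ) : ZMod (6 * n)) = (b : ℕ) ↔ a % 2 = b % 2 ∧ a % (3 * n) = b % (3 * n) := by
  rw [ZMod.natCast_eq_natCast_iff]
  have hc : Nat.Coprime 2 (3 * n) := by
    rw [Nat.coprime_two_left]; exact Odd.mul (by decide) ho
  have := Nat.modEq_and_modEq_iff_modEq_mul (a := a) (b := b) hc
  rw [show 6 * n = 2 * (3 * n) by ring, ← this]
  rfl

theorem auxPhi_mod (n : ℕ) (m : ZMod (6 * n)) : (auxPhi n m).val % (3 * n) = m.val % (3 * n) := by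
  rw [auxPhi, aux_val_cast, aux_modmod]; simp

theorem aux_div_lt (n : ℕ) (hn : 1 ≤ n) (m : ZMod (6 * n)) : m.val / (3 * n) < 2 := by
  have : NeZero (6 * n) := ⟨by omega⟩
  have := ZMod.val_lt m
  exact Nat.div_lt_of_lt_mul (by omega)

theorem aux_par (n : ℕ) (ho : Odd n) (a s : ℕ) : (a + 3 * n * (a + s)) % 2 = s % 2 := by
  obtain ⟨k, rfl⟩ := ho
  have : a + 3 * (2 * k + 1) * (a + s) = s + 2 * (3 * k * (a + s) + 2 * a + s) := by ring
  rw [this]; omega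

theorem aux_ext (n : ℕ) (hn : 1 ≤ n) (m m' : ZMod (6 * n)) (h1 : m.val % (3 * n) = m'.val % (3 * n))
    (h2 : m.val / (3 * n) = m'.val / (3 * n)) : m = m' := by
  have : NeZero (6 * n) := ⟨by omega⟩
  apply ZMod.val_injective
  rw [← Nat.div_add_mod m.val (3 * n), ← Nat.div_add_mod m'.val (3 * n), h1, h2]

theorem auxPhi_inj (n : ℕ) (hn : 1 ≤ n) (ho : Odd n) : Function.Injective (auxPhi n) := by
  intro m m' h
  have h1 := auxPhi_mod n m
  rw [h, auxPhi_mod] at h1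
  unfold auxPhi at h
  rw [aux_crt n ho, aux_par n ho, aux_par n ho] at h
  have := aux_div_lt n hn m
  have := aux_div_lt n hn m'
  refine aux_ext n hn _ _ h1.symm ?_
  have h2 := h.1
  rwa [Nat.mod_eq_of_lt (by assumption), Nat.mod_eq_of_lt (by assumption)] at h2

theorem auxPhi_key (n : ℕ) (hn : 1 ≤ n) (ho : Odd n) (m m' : ZMod (6 * n)) :
    auxPhi n m' + ((3 * n : ℕ) : ZMod (6 * n)) = auxPhi n m + 1 ↔ auxR n m m' := by
  unfold auxPhi auxR
  rw [← Nat.cast_add, ← Nat.cast_add_one, aux_crt n ho]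
  have d1 := aux_div_lt n hn m
  have d2 := aux_div_lt n hn m'
  have p1 := aux_par n ho (m.val % (3 * n)) (m.val / (3 * n))
  have p2 := aux_par n ho (m'.val % (3 * n)) (m'.val / (3 * n))
  have o : (3 * n) % 2 = 1 := by obtain ⟨k, rfl⟩ := ho; omega
  apply and_congr
  · generalize (m.val % (3 * n) + 3 * n * (m.val % (3 * n) + m.val / (3 * n))) = A at *
    generalize (m'.val % (3 * n) + 3 * n * (m'.val % (3 * n) + m'.val / (3 * n))) = B at *
    generalize m.val / (3 * n) = s at *
    generalize m'.val / (3 * n) = s' at *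
    omega
  · rw [Nat.add_mod_right, Nat.add_mul_mod_self_left, Nat.add_right_comm, Nat.add_mul_mod_self_left,
      Nat.mod_mod]

/-- apply a permutation on circuit indices -/
def auxLift (n : ℕ) (e : ZMod (6 * n) ≃ ZMod (6 * n)) : ClawVert n ≃ ClawVert n where
  toFun := fun x => match x with
    | .circ m => .circ (e m)
    | .leaf i j => .leaf i j
    | .centre i => .centre i
  invFun := fun x => match x with
    | .circ m => .circ (e.symm m)
    | .leaf i j => .leaf i j
    | .centre i => .centre i
  left_inv := by rintro (_ | _ | _) <;> simp
  right_inv := by rintro (_ | _ | _) <;> simp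

theorem aux_tf (n : ℕ) (hn : 1 ≤ n) (ho : Odd n) : ∃ α β : ClawVert n ≃ ClawVert n,
    ∀ x y : ClawVert n, (CG' n).Adj x y ↔ (CG n).Adj (α x) (β y) := by
  have : NeZero (6 * n) := ⟨by omega⟩
  let e : ZMod (6 * n) ≃ ZMod (6 * n) :=
    Equiv.ofBijective (auxPhi n) (Finite.injective_iff_bijective.1 (auxPhi_inj n hn ho))
  have he : ∀ m, e m = auxPhi n m := fun _ => rfl
  have hs : ∀ m : ZMod (6 * n), (m + ((3 * n : ℕ) : ZMod (6 * n))).val % (3 * n) = m.val % (3 * n) :=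
    fun m => (aux_eq_iff n hn _ _).2 (Or.inr rfl)
  refine ⟨auxLift n e, auxLift n (e.trans (Equiv.addRight ((3 * n : ℕ) : ZMod (6 * n)))), ?_⟩
  rintro (m | ⟨i, j⟩ | i) (m' | ⟨i', j'⟩ | i') <;>
    simp only [auxLift, Equiv.coe_fn_mk, Equiv.trans_apply, Equiv.coe_addRight, he,
      cg_cc n hn, cg'_cc n hn, cg_lc n hn, cg'_lc n hn, cg_cl n hn, cg'_cl n hn, cg_ll, cg'_ll,
      cg_tt, cg'_tt, cg_ct, cg'_ct, cg_tc, cg'_tc, cg_tl, cg'_tl, cg_lt, cg'_lt, hs, auxPhi_mod]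
  rw [← auxPhi_key n hn ho, ← auxPhi_key n hn ho]
  have z := aux_dbl n
  apply or_congr Iff.rfl
  constructor
  · intro h; linear_combination h - z
  · intro h; linear_combination h + z

/-- functions satisfying the eigenvalue-two equation at all cubic vertices -/
def auxE {V : Type} (G : SimpleGraph V) : Submodule ℝ (V → ℝ) where
  carrier := {f | ∀ x a b c, a ≠ b → a ≠ c → b ≠ c → (∀ y, G.Adj x y ↔ y = a ∨ y = b ∨ y = c) →
    f a + f b + f c = 2 * f x}
  add_mem' := by
    intro f g hf hg x a b c h1 h2 h3 h
    have := hf x a b c h1 h2 h3 h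
    have := hg x a b c h1 h2 h3 h
    simp only [Pi.add_apply]; linarith
  zero_mem' := by intro x a b c _ _ _ _; simp
  smul_mem' := by
    intro r f hf x a b c h1 h2 h3 h
    have := hf x a b c h1 h2 h3 h
    simp only [Pi.smul_apply, smul_eq_mul]; linear_combination r * this

theorem auxE_iso {V : Type} (G H : SimpleGraph V) (e : G ≃g H) (f : V → ℝ) (hf : f ∈ auxE H) :
    f ∘ e ∈ auxE G := by
  intro x a b c h1 h2 h3 h
  apply hf (e x) (e a) (e b) (e c) (by simpa using h1) (by simpa using h2) (by simpa using h3)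
  intro y
  obtain ⟨y, rfl⟩ := e.surjective y
  rw [e.map_adj_iff, h]; simp

theorem aux_sum3 {V : Type} (f : V → ℝ) (a b c a' b' c' : V) (h1 : a ≠ b) (h2 : a ≠ c) (h3 : b ≠ c)
    (h1' : a' ≠ b') (h2' : a' ≠ c') (h3' : b' ≠ c')
    (h : ∀ y, (y = a ∨ y = b ∨ y = c) ↔ (y = a' ∨ y = b' ∨ y = c')) :
    f a + f b + f c = f a' + f b' + f c' := by
  classical
  have : ({a, b, c} : Finset V) = {a', b', c'} := by ext y; simpa using h y
  have h4 : ∑ y ∈ ({a, b, c} : Finset V), f y = ∑ y ∈ ({a', b', c'} : Finset V), f y := by rw [this]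
  rw [Finset.sum_insert (by simp [h1, h2]), Finset.sum_insert (by simp [h3]), Finset.sum_singleton,
    Finset.sum_insert (by simp [h1', h2']), Finset.sum_insert (by simp [h3']),
    Finset.sum_singleton] at h4
  linarith

theorem aux_p (n : ℕ) (hn : 1 ≤ n) (r : ℕ) (hr : r < 3 * n) :
    ∃ (i : Fin n) (j : Fin 3), ∀ (i' : Fin n) (j' : Fin 3), r = i' + j' * n ↔ (i' = i ∧ j' = j) := by
  refine ⟨⟨r % n, Nat.mod_lt _ hn⟩, ⟨r / n, Nat.div_lt_of_lt_mul (by omega)⟩, ?_⟩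
  intro i' j'
  rw [Fin.ext_iff, Fin.ext_iff]
  simp only
  constructor
  · rintro rfl
    have := i'.2
    rw [Nat.add_mul_mod_self_right, Nat.mod_eq_of_lt this, Nat.add_mul_div_right _ _ hn,
      Nat.div_eq_of_lt this]
    simp
  · rintro ⟨h1, h2⟩
    rw [h1, h2, Nat.mod_add_div']

theorem aux_nb (n : ℕ) (hn : 1 ≤ n) (m : ZMod (6 * n)) : ∃ i j,
    (∀ y, (CG n).Adj (.circ m) y ↔ y = .circ (m + 1) ∨ y = .circ (m - 1) ∨ y = .leaf i j) ∧
    (∀ y, (CG n).Adj (.circ (m + (3 * n : ℕ))) y ↔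
      y = .circ (m + (3 * n : ℕ) + 1) ∨ y = .circ (m + (3 * n : ℕ) - 1) ∨ y = .leaf i j) ∧
    (∀ y, (CG' n).Adj (.circ m) y ↔ (∃ m', y = .circ m' ∧ (auxR n m m' ∨ auxR n m' m)) ∨
      y = .leaf i j) := by
  obtain ⟨i, j, h⟩ := aux_p n hn (m.val % (3 * n)) (Nat.mod_lt _ (by omega))
  have hs : (m + ((3 * n : ℕ) : ZMod (6 * n))).val % (3 * n) = m.val % (3 * n) :=
    (aux_eq_iff n hn _ _).2 (Or.inr rfl)
  refine ⟨i, j, ?_, ?_, ?_⟩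
  · rintro (m' | ⟨i', j'⟩ | i')
    · simp [cg_cc n hn, eq_sub_iff_add_eq, eq_comm]
    · simp [cg_cl n hn, h]
    · simp [cg_ct]
  · rintro (m' | ⟨i', j'⟩ | i')
    · simp only [cg_cc n hn, eq_sub_iff_add_eq, ClawVert.circ.injEq, reduceCtorEq, or_false]
      rw [eq_comm (a := m' + 1)]
    · simp only [cg_cl n hn, hs, h]; simp
    · simp [cg_ct]
  · rintro (m' | ⟨i', j'⟩ | i')
    · simp [cg'_cc n hn]
    · simp [cg'_cl n hn, h]
    · simp [cg'_ct]

theorem aux_pm (n : ℕ) (hn : 1 ≤ n) (m : ZMod (6 * n)) : m + 1 ≠ m - 1 := by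
  have := aux_one n 2 (by omega) (by omega)
  intro h
  apply this
  push_cast
  linear_combination h

theorem auxE_symm (n : ℕ) (hn : 1 ≤ n) (f : ClawVert n → ℝ) (hf : f ∈ auxE (CG n))
    (m : ZMod (6 * n)) : f (.circ (m + (3 * n : ℕ))) = f (.circ m) := by
  have : NeZero (6 * n) := ⟨by omega⟩
  let g : ZMod (6 * n) → ℝ := fun m => f (.circ (m + (3 * n : ℕ))) - f (.circ m)
  have g1 : ∀ m, g (m + (3 * n : ℕ)) = - g m := by
    intro m
    simp only [g]
    rw [add_assoc, aux_dbl, add_zero]; ring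
  have g2 : ∀ m, g (m + 1) + g (m - 1) = 2 * g m := by
    intro m
    obtain ⟨i, j, h1, h2, -⟩ := aux_nb n hn m
    have e1 := hf _ _ _ _ (by simpa using aux_pm n hn m) (by simp) (by simp) h1
    have e2 := hf _ _ _ _ (by simpa using aux_pm n hn (m + (3 * n : ℕ))) (by simp) (by simp) h2
    simp only [g]
    rw [add_right_comm m 1, show m - 1 + ((3 * n : ℕ) : ZMod (6 * n)) = m + (3 * n : ℕ) - 1 by ring]
    linarith
  have g3 : ∀ m, ∀ k : ℕ, g (m + k + 1) - g (m + k) = g (m + 1) - g m := by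
    intro m k
    induction k with
    | zero => simp
    | succ k ih =>
      have := g2 (m + k + 1)
      rw [add_sub_cancel_right] at this
      push_cast
      rw [← add_assoc m]
      linarith
  have g4 : ∀ m, g (m + 1) = g m := by
    intro m
    have := g3 m (3 * n)
    rw [g1, add_right_comm, g1] at this
    linarith
  have g5 : ∀ m, ∀ k : ℕ, g (m + k) = g m := by
    intro m k
    induction k with
    | zero => simp
    | succ k ih => push_cast; rw [← add_assoc, g4, ih]
  have := g5 m (3 * n)
  rw [g1] at this
  have : g m = 0 := by linarith
  simp only [g] at this
  linarith

theorem auxE_symm' (n : ℕ) (hn : 1 ≤ n) (f : ClawVert n → ℝ) (hf : f ∈ auxE (CG n))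
    (m m' : ZMod (6 * n)) (h : m.val % (3 * n) = m'.val % (3 * n)) :
    f (.circ m) = f (.circ m') := by
  rcases (aux_eq_iff n hn _ _).1 h with rfl | rfl
  · rfl
  · exact auxE_symm n hn f hf m'

theorem aux_wrap (N r r' : ℕ) (h : r < N) (h' : r' < N) :
    r = (r' + 1) % N ↔ r' = (r + (N - 1)) % N := by
  have e1 : (r' + 1) % N = if r' + 1 = N then 0 else r' + 1 := by
    split_ifs with c
    · rw [c, Nat.mod_self]
    · exact Nat.mod_eq_of_lt (by omega)
  have e2 : (r + (N - 1)) % N = if r = 0 then N - 1 else r - 1 := by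
    split_ifs with c
    · rw [c, Nat.zero_add]; exact Nat.mod_eq_of_lt (by omega)
    · rw [show r + (N - 1) = (r - 1) + N by omega, Nat.add_mod_right]
      exact Nat.mod_eq_of_lt (by omega)
  rw [e1, e2]
  split_ifs <;> omega

theorem aux_mk (n : ℕ) (s r : ℕ) (hs : s < 2) (hr : r < 3 * n) :
    (((3 * n * s + r : ℕ) : ZMod (6 * n))).val = 3 * n * s + r := by
  rw [aux_val_cast]
  apply Nat.mod_eq_of_lt
  have : 3 * n * s ≤ 3 * n * 1 := Nat.mul_le_mul_left _ (by omega)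
  omega

theorem aux_mk_mod (n : ℕ) (s r : ℕ) (hs : s < 2) (hr : r < 3 * n) :
    (((3 * n * s + r : ℕ) : ZMod (6 * n))).val % (3 * n) = r := by
  rw [aux_mk n s r hs hr, Nat.mul_add_mod, Nat.mod_eq_of_lt hr]

theorem aux_mk_div (n : ℕ) (s r : ℕ) (hs : s < 2) (hr : r < 3 * n) :
    (((3 * n * s + r : ℕ) : ZMod (6 * n))).val / (3 * n) = s := by
  rw [aux_mk n s r hs hr, Nat.mul_add_div (by omega), Nat.div_eq_of_lt hr, Nat.add_zero]

theorem aux_succ (n : ℕ) (hn : 1 ≤ n) (m : ZMod (6 * n)) : (m + 1).val = (m.val + 1) % (6 * n) := by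
  have : NeZero (6 * n) := ⟨by omega⟩
  rw [← aux_val_cast]; push_cast; rw [ZMod.natCast_zmod_val]

theorem aux_pred (n : ℕ) (hn : 1 ≤ n) (m : ZMod (6 * n)) :
    (m - 1).val = (m.val + (6 * n - 1)) % (6 * n) := by
  have : NeZero (6 * n) := ⟨by omega⟩
  rw [← aux_val_cast, Nat.cast_add, Nat.cast_sub (by omega), ZMod.natCast_self, ZMod.natCast_zmod_val]
  congr 1
  push_cast
  ring

theorem auxS (n : ℕ) (hn : 1 ≤ n) (m : ZMod (6 * n)) : ∃ p q : ZMod (6 * n), p ≠ q ∧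
    p.val % (3 * n) = (m + 1).val % (3 * n) ∧ q.val % (3 * n) = (m - 1).val % (3 * n) ∧
    p.val / (3 * n) = m.val / (3 * n) ∧ q.val / (3 * n) = m.val / (3 * n) ∧
    ∀ m', (auxR n m m' ∨ auxR n m' m) ↔ (m' = p ∨ m' = q) := by
  have hN : 0 < 3 * n := by omega
  have hr : m.val % (3 * n) < 3 * n := Nat.mod_lt _ hN
  have hs := aux_div_lt n hn m
  have b1 : (m.val % (3 * n) + 1) % (3 * n) < 3 * n := Nat.mod_lt _ hN
  have b2 : (m.val % (3 * n) + (3 * n - 1)) % (3 * n) < 3 * n := Nat.mod_lt _ hN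
  have pm := aux_mk_mod n _ _ hs b1
  have pd := aux_mk_div n _ _ hs b1
  have qm := aux_mk_mod n _ _ hs b2
  have qd := aux_mk_div n _ _ hs b2
  generalize ((3 * n * (m.val / (3 * n)) + (m.val % (3 * n) + 1) % (3 * n) : ℕ) : ZMod (6 * n)) = p at *
  generalize ((3 * n * (m.val / (3 * n)) + (m.val % (3 * n) + (3 * n - 1)) % (3 * n) : ℕ) :
    ZMod (6 * n)) = q at *
  refine ⟨p, q, ?_, ?_, ?_, pd, qd, ?_⟩
  · rintro rfl
    have h1 := pm
    rw [qm] at h1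
    rw [eq_comm, ← aux_wrap _ _ _ hr b1, Nat.mod_add_mod] at h1
    have h2 : (m.val % (3 * n) + 0) ≡ m.val % (3 * n) + 2 [MOD 3 * n] := by
      unfold Nat.ModEq
      rw [Nat.add_zero, Nat.mod_mod]; exact h1
    have h3 := Nat.ModEq.add_left_cancel' _ h2
    have h4 := (Nat.modEq_zero_iff_dvd.1 h3.symm)
    have := Nat.le_of_dvd (by omega) h4
    omega
  · rw [pm, aux_succ n hn, aux_modmod, Nat.mod_add_mod]
  · rw [qm, aux_pred n hn, aux_modmod, Nat.mod_add_mod,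
      show m.val + (6 * n - 1) = m.val + (3 * n - 1) + 3 * n by omega, Nat.add_mod_right]
  · intro m'
    unfold auxR
    apply or_congr
    · constructor
      · rintro ⟨h1, h2⟩
        exact aux_ext n hn _ _ (by rw [h2, pm]) (by rw [pd, h1])
      · rintro rfl
        exact ⟨pd.symm, pm⟩
    · rw [aux_wrap _ _ _ hr (Nat.mod_lt _ hN)]
      constructor
      · rintro ⟨h1, h2⟩
        exact aux_ext n hn _ _ (by rw [h2, qm]) (by rw [qd, h1])
      · rintro rfl
        exact ⟨qd, qm⟩

/-- the antisymmetric eigenfunction of the companion -/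
noncomputable def auxh (n : ℕ) : ClawVert n → ℝ
  | .circ m => if m.val / (3 * n) = 0 then 1 else -1
  | _ => 0

theorem auxE_le (n : ℕ) (hn : 1 ≤ n) : auxE (CG n) ≤ auxE (CG' n) := by
  intro f hf x a b c h1 h2 h3 h
  rcases x with m | ⟨i, j⟩ | i
  · obtain ⟨i, j, k1, -, k3⟩ := aux_nb n hn m
    obtain ⟨p, q, hpq, hp, hq, -, -, hR⟩ := auxS n hn m
    have e1 := hf _ _ _ _ (by simpa using aux_pm n hn m) (by simp) (by simp) k1
    rw [← auxE_symm' n hn f hf _ _ hp, ← auxE_symm' n hn f hf _ _ hq] at e1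
    rw [← e1]
    apply aux_sum3 f _ _ _ _ _ _ h1 h2 h3 (by simpa using hpq) (by simp) (by simp)
    intro y
    rw [← h, k3]
    simp only [hR]
    constructor
    · rintro (⟨m', rfl, rfl | rfl⟩ | rfl) <;> simp
    · rintro (rfl | rfl | rfl) <;> simp
  · apply hf _ _ _ _ h1 h2 h3
    intro y
    rw [← h]
    rcases y with m | ⟨i', j'⟩ | i'
    · rw [cg_lc n hn, cg'_lc n hn]
    · simp only [cg_ll, cg'_ll]
    · rw [cg_lt, cg'_lt]
  · apply hf _ _ _ _ h1 h2 h3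
    intro y
    rw [← h]
    rcases y with m | ⟨i', j'⟩ | i'
    · simp only [cg_tc, cg'_tc]
    · rw [cg_tl, cg'_tl]
    · simp only [cg_tt, cg'_tt]

theorem auxh_mem (n : ℕ) (hn : 1 ≤ n) : auxh n ∈ auxE (CG' n) := by
  intro x a b c h1 h2 h3 h
  rcases x with m | ⟨i, j⟩ | i
  · obtain ⟨i, j, -, -, k3⟩ := aux_nb n hn m
    obtain ⟨p, q, hpq, -, -, hp, hq, hR⟩ := auxS n hn m
    have : auxh n a + auxh n b + auxh n c =
        auxh n (.circ p) + auxh n (.circ q) + auxh n (.leaf i j) := by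
      apply aux_sum3 _ _ _ _ _ _ _ h1 h2 h3 (by simpa using hpq) (by simp) (by simp)
      intro y
      rw [← h, k3]
      simp only [hR]
      constructor
      · rintro (⟨m', rfl, rfl | rfl⟩ | rfl) <;> simp
      · rintro (rfl | rfl | rfl) <;> simp
    rw [this]
    simp only [auxh, hp, hq]
    ring
  · have b0 := aux_ij n i j
    have e0m := aux_mk_mod n 0 _ (by omega) b0
    have e0d := aux_mk_div n 0 _ (by omega) b0
    have e1m := aux_mk_mod n 1 _ (by omega) b0
    have e1d := aux_mk_div n 1 _ (by omega) b0
    generalize ((3 * n * 0 + (i + j * n) : ℕ) : ZMod (6 * n)) = p at *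
    generalize ((3 * n * 1 + (i + j * n) : ℕ) : ZMod (6 * n)) = q at *
    have hpq : p ≠ q := by rintro rfl; omega
    have : auxh n a + auxh n b + auxh n c =
        auxh n (.circ p) + auxh n (.circ q) + auxh n (.centre i) := by
      apply aux_sum3 _ _ _ _ _ _ _ h1 h2 h3 (by simpa using hpq) (by simp) (by simp)
      intro y
      rw [← h]
      rcases y with m | ⟨i', j'⟩ | i'
      · rw [cg'_lc n hn]
        simp only [ClawVert.circ.injEq, reduceCtorEq, or_false]
        constructor
        · intro hm
          have := aux_div_lt n hn m
          rcases (show m.val / (3 * n) = 0 ∨ m.val / (3 * n) = 1 from Nat.le_one_iff_eq_zero_or_eq_one.1 (Nat.lt_succ_iff.1 this)) with hd | hd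
          · left; exact aux_ext n hn _ _ (by rw [hm, e0m]) (by rw [hd, e0d])
          · right; exact aux_ext n hn _ _ (by rw [hm, e1m]) (by rw [hd, e1d])
        · rintro (rfl | rfl) <;> assumption
      · simp [cg'_ll]
      · simp [cg'_lt]
    rw [this]
    simp [auxh, e0d, e1d]
  · have key : ∀ y, (CG' n).Adj (.centre i) y → auxh n y = 0 := by
      rintro (m | ⟨i', j'⟩ | i') hy
      · exact absurd hy (cg'_tc _ _ _)
      · rfl
      · rfl
    rw [key a ((h a).2 (by simp)), key b ((h b).2 (by simp)), key c ((h c).2 (by simp))]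
    simp [auxh]

theorem auxh_nmem (n : ℕ) (hn : 1 ≤ n) : auxh n ∉ auxE (CG n) := by
  intro h
  have b0 : 0 < 3 * n := by omega
  have e0m := aux_mk_mod n 0 0 (by omega) b0
  have e0d := aux_mk_div n 0 0 (by omega) b0
  have e1m := aux_mk_mod n 1 0 (by omega) b0
  have e1d := aux_mk_div n 1 0 (by omega) b0
  have := auxE_symm' n hn _ h _ _ (e0m.trans e1m.symm)
  simp only [auxh, e0d, e1d] at this
  norm_num at this

theorem aux_fin (n : ℕ) (hn : 1 ≤ n) : Finite (ClawVert n) := by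
  have : NeZero (6 * n) := ⟨by omega⟩
  let g : ZMod (6 * n) ⊕ (Fin n × Fin 3) ⊕ Fin n → ClawVert n := fun x => match x with
    | .inl m => .circ m
    | .inr (.inl p) => .leaf p.1 p.2
    | .inr (.inr i) => .centre i
  apply Finite.of_surjective g
  rintro (m | ⟨i, j⟩ | i)
  · exact ⟨.inl m, rfl⟩
  · exact ⟨.inr (.inl (i, j)), rfl⟩
  · exact ⟨.inr (.inr i), rfl⟩

theorem auxE_ne (n : ℕ) (hn : 1 ≤ n) : IsEmpty (CG n ≃g CG' n) := by
  constructor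
  intro e
  have := aux_fin n hn
  have hlt : auxE (CG n) < auxE (CG' n) :=
    lt_of_le_of_ne (auxE_le n hn) (fun h => auxh_nmem n hn (h ▸ auxh_mem n hn))
  have h1 := Submodule.finrank_lt_finrank_of_lt hlt
  let L : auxE (CG' n) →ₗ[ℝ] auxE (CG n) :=
    (LinearMap.funLeft ℝ ℝ e).restrict (fun f hf => auxE_iso _ _ e f hf)
  have hL : Function.Injective L := by
    intro f g hfg
    have h2 : (f : ClawVert n → ℝ) ∘ e = (g : ClawVert n → ℝ) ∘ e := congrArg Subtype.val hfg
    exact Subtype.ext (e.surjective.injective_comp_right h2)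
  have h2 := LinearMap.finrank_le_finrank_of_injective hL
  omega

/-- two-colouring for even `n` -/
def auxC (n : ℕ) : ClawVert n → Bool
  | .circ m => decide (m.val % 2 = 0)
  | .leaf i _ => decide (i.val % 2 = 1)
  | .centre i => decide (i.val % 2 = 0)

theorem aux_mod2 (N k : ℕ) (h : Even N) : k % N % 2 = k % 2 :=
  Nat.mod_mod_of_dvd k h.two_dvd

theorem auxC_lc (n : ℕ) (he : Even n) (i : Fin n) (j : Fin 3) (m : ZMod (6 * n))
    (h : m.val % (3 * n) = i + j * n) : auxC n (.circ m) ≠ auxC n (.leaf i j) := by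
  have h1 := congrArg (· % 2) h
  rw [aux_mod2 _ _ (he.mul_left 3)] at h1
  have h2 : (j.val * n) % 2 = 0 := Nat.even_iff.1 (he.mul_left _)
  simp only [auxC, ne_eq, decide_eq_decide]
  omega

theorem auxC_cg (n : ℕ) (hn : 1 ≤ n) (he : Even n) (x y : ClawVert n) (h : (CG n).Adj x y) :
    auxC n x ≠ auxC n y := by
  have key : ∀ m : ZMod (6 * n), auxC n (.circ m) ≠ auxC n (.circ (m + 1)) := by
    intro m
    have h1 := congrArg (· % 2) (aux_succ n hn m)
    rw [aux_mod2 _ _ (he.mul_left 6)] at h1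
    simp only [auxC, ne_eq, decide_eq_decide]
    omega
  rcases x with m | ⟨i, j⟩ | i <;> rcases y with m' | ⟨i', j'⟩ | i'
  · rw [cg_cc n hn] at h
    rcases h with rfl | rfl
    · exact key m
    · exact (key m').symm
  · exact auxC_lc n he _ _ _ ((cg_cl n hn _ _ _).1 h)
  · exact absurd h (cg_ct _ _ _)
  · exact (auxC_lc n he _ _ _ ((cg_lc n hn _ _ _).1 h)).symm
  · exact absurd h (cg_ll _ _ _ _ _)
  · rw [cg_lt] at h
    subst h
    simp only [auxC, ne_eq, decide_eq_decide]; omega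
  · exact absurd h (cg_tc _ _ _)
  · rw [cg_tl] at h
    subst h
    simp only [auxC, ne_eq, decide_eq_decide]; omega
  · exact absurd h (cg_tt _ _ _)

theorem auxC_cg' (n : ℕ) (hn : 1 ≤ n) (he : Even n) (x y : ClawVert n) (h : (CG' n).Adj x y) :
    auxC n x ≠ auxC n y := by
  have key : ∀ m m' : ZMod (6 * n), auxR n m m' → auxC n (.circ m) ≠ auxC n (.circ m') := by
    rintro m m' ⟨-, h⟩
    have h1 := congrArg (· % 2) h
    rw [Nat.mod_add_mod, aux_mod2 _ _ (he.mul_left 3), aux_mod2 _ _ (he.mul_left 3)] at h1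
    simp only [auxC, ne_eq, decide_eq_decide]
    omega
  rcases x with m | ⟨i, j⟩ | i <;> rcases y with m' | ⟨i', j'⟩ | i'
  · rw [cg'_cc n hn] at h
    rcases h with h | h
    · exact key _ _ h
    · exact (key _ _ h).symm
  · exact auxC_lc n he _ _ _ ((cg'_cl n hn _ _ _).1 h)
  · exact absurd h (cg'_ct _ _ _)
  · exact (auxC_lc n he _ _ _ ((cg'_lc n hn _ _ _).1 h)).symm
  · exact absurd h (cg'_ll _ _ _ _ _)
  · rw [cg'_lt] at h
    subst h
    simp only [auxC, ne_eq, decide_eq_decide]; omega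
  · exact absurd h (cg'_tc _ _ _)
  · rw [cg'_tl] at h
    subst h
    simp only [auxC, ne_eq, decide_eq_decide]; omega
  · exact absurd h (cg'_tt _ _ _)

theorem aux_conn (n : ℕ) (hn : 1 ≤ n) (f : ClawVert n → Bool)
    (hf : ∀ x y, (CG' n).Adj x y → f x = f y) (x : ClawVert n) :
    f x = f (.circ ((3 * n * 0 + 0 : ℕ) : ZMod (6 * n))) := by
  have : NeZero (6 * n) := ⟨by omega⟩
  have hN : 0 < 3 * n := by omega
  have step : ∀ s, s < 2 → ∀ r, r < 3 * n → f (.circ ((3 * n * s + r : ℕ) : ZMod (6 * n))) =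
      f (.circ ((3 * n * s + 0 : ℕ) : ZMod (6 * n))) := by
    intro s hs r
    induction r with
    | zero => intro _; rfl
    | succ r ih =>
      intro hr
      rw [← ih (by omega)]
      symm
      apply hf
      rw [cg'_cc n hn]
      left
      unfold auxR
      rw [aux_mk_mod n _ _ hs hr, aux_mk_mod n _ _ hs (by omega), aux_mk_div n _ _ hs hr,
        aux_mk_div n _ _ hs (by omega), Nat.mod_eq_of_lt hr]
      exact ⟨rfl, rfl⟩
  have h01 : f (.circ ((3 * n * 1 + 0 : ℕ) : ZMod (6 * n))) =
      f (.circ ((3 * n * 0 + 0 : ℕ) : ZMod (6 * n))) := by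
    rw [hf (.circ ((3 * n * 1 + 0 : ℕ) : ZMod (6 * n))) (.leaf ⟨0, hn⟩ 0),
      hf (.circ ((3 * n * 0 + 0 : ℕ) : ZMod (6 * n))) (.leaf ⟨0, hn⟩ 0)]
    · rw [cg'_cl n hn, aux_mk_mod n _ _ (by omega) hN]; simp
    · rw [cg'_cl n hn, aux_mk_mod n _ _ (by omega) hN]; simp
  have hc : ∀ m, f (.circ m) = f (.circ ((3 * n * 0 + 0 : ℕ) : ZMod (6 * n))) := by
    intro m
    have hs := aux_div_lt n hn m
    have h1 := step _ hs _ (Nat.mod_lt m.val hN)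
    rw [Nat.div_add_mod, ZMod.natCast_zmod_val] at h1
    rw [h1]
    rcases Nat.le_one_iff_eq_zero_or_eq_one.1 (Nat.lt_succ_iff.1 hs) with hd | hd
    · rw [hd]
    · rw [hd, h01]
  have hl : ∀ i j, f (.leaf i j) = f (.circ ((3 * n * 0 + 0 : ℕ) : ZMod (6 * n))) := by
    intro i j
    rw [← hc ((3 * n * 0 + (i + j * n) : ℕ) : ZMod (6 * n))]
    apply hf
    rw [cg'_lc n hn, aux_mk_mod n _ _ (by omega) (aux_ij n i j)]
  rcases x with m | ⟨i, j⟩ | i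
  · exact hc m
  · exact hl i j
  · rw [← hl i 0]
    apply hf
    rw [cg'_tl]

theorem aux_even (n : ℕ) (hn : 1 ≤ n) (he : Even n) (h : ∃ α β : ClawVert n ≃ ClawVert n,
    ∀ x y : ClawVert n, (CG' n).Adj x y ↔ (CG n).Adj (α x) (β y)) : Nonempty (CG n ≃g CG' n) := by
  obtain ⟨α, β, h⟩ := h
  have := aux_fin n hn
  let φ : ClawVert n → ClawVert n := fun x => if auxC n x then α x else β x
  have φt : ∀ x, auxC n x = true → φ x = α x := fun x hx => by simp [φ, hx]
  have φf : ∀ x, auxC n x = false → φ x = β x := fun x hx => by simp [φ, hx]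
  have h' : ∀ x y, (CG' n).Adj x y ↔ (CG n).Adj (β x) (α y) := fun x y => by
    rw [SimpleGraph.adj_comm, h, SimpleGraph.adj_comm]
  have hA : ∀ x y, auxC n x ≠ auxC n y → ((CG' n).Adj x y ↔ (CG n).Adj (φ x) (φ y)) := by
    intro x y hxy
    cases hx : auxC n x <;> cases hy : auxC n y
    · rw [hx, hy] at hxy; exact absurd rfl hxy
    · rw [φf x hx, φt y hy, h']
    · rw [φt x hx, φf y hy, h]
    · rw [hx, hy] at hxy; exact absurd rfl hxy
  have hc := aux_conn n hn (fun x => xor (auxC n (φ x)) (auxC n x)) (by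
    intro x y hxy
    have h1 := auxC_cg' n hn he x y hxy
    have h2 := auxC_cg n hn he _ _ ((hA x y h1).1 hxy)
    revert h1 h2
    generalize auxC n x = a
    generalize auxC n y = b
    generalize auxC n (φ x) = c
    generalize auxC n (φ y) = d
    revert a b c d
    decide)
  have hc2 : ∀ x y, (auxC n x = auxC n y ↔ auxC n (φ x) = auxC n (φ y)) := by
    intro x y
    have h1 := (hc x).trans (hc y).symm
    revert h1
    generalize auxC n x = a
    generalize auxC n y = b
    generalize auxC n (φ x) = c
    generalize auxC n (φ y) = d
    revert a b c d
    decide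
  have inj : Function.Injective φ := by
    intro x y hxy
    have h1 := (hc2 x y).2 (by rw [hxy])
    cases hx : auxC n x
    · rw [φf x hx, φf y (h1 ▸ hx)] at hxy
      exact β.injective hxy
    · rw [φt x hx, φt y (h1 ▸ hx)] at hxy
      exact α.injective hxy
  let e : ClawVert n ≃ ClawVert n := Equiv.ofBijective φ (Finite.injective_iff_bijective.1 inj)
  have hiff : ∀ x y, (CG n).Adj (φ x) (φ y) ↔ (CG' n).Adj x y := by
    intro x y
    by_cases hxy : auxC n x = auxC n y
    · constructor
      · intro hh
        exact absurd ((hc2 x y).1 hxy) (auxC_cg n hn he _ _ hh)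
      · intro hh
        exact absurd hxy (auxC_cg' n hn he _ _ hh)
    · exact (hA x y hxy).symm
  let E : CG' n ≃g CG n := { toEquiv := e, map_rel_iff' := fun {x y} => hiff x y }
  exact ⟨E.symm⟩

/-- For `n ≥ 1`, the claw graph `CG(n)` and its companion `CG'(n)` are
TF-cousins (TF-isomorphic but not isomorphic) iff `n` is odd. -/
theorem claw_tf_cousins_iff_odd (n : ℕ) (hn : 1 ≤ n) :
    ((∃ α β : ClawVert n ≃ ClawVert n,
        ∀ x y : ClawVert n, (CG' n).Adj x y ↔ (CG n).Adj (α x) (β y)) ∧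
      IsEmpty (CG n ≃g CG' n)) ↔ Odd n := by
  constructor
  · rintro ⟨h1, h2⟩
    by_contra h
    rw [Nat.not_odd_iff_even] at h
    exact (not_isEmpty_iff.2 (aux_even n hn h h1)) h2
  · intro ho
    exact ⟨aux_tf n hn ho, auxE_ne n hn⟩
end

section
/- For every even natural number n ≥ 2, both the claw graph CG(n) and its companion CG'(n) are bipartite (2-colorable). -/
/-- The two-colouring. -/
def clawCol (n : ℕ) (h : 2 ∣ 6 * n) : ClawVert n → ZMod 2
  | .circ m => ZMod.castHom h (ZMod 2) m
  | .leaf i _ => ((i : ℕ) : ZMod 2) + 1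
  | .centre i => ((i : ℕ) : ZMod 2)

theorem zmod2_ne (x : ZMod 2) : x ≠ x + 1 := by
  revert x; decide

theorem claw_leaf_ne (n : ℕ) (h : 2 ∣ 6 * n) (h2 : ((n : ℕ) : ZMod 2) = 0)
    (i : Fin n) (j : Fin 3) (m : ZMod (6 * n))
    (hm : m = ((i : ℕ) : ZMod (6 * n)) + ((j : ℕ) : ZMod (6 * n)) * ((n : ℕ) : ZMod (6 * n)) ∨
      m = ((i : ℕ) : ZMod (6 * n)) + ((j : ℕ) : ZMod (6 * n)) * ((n : ℕ) : ZMod (6 * n))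
            + ((3 * n : ℕ) : ZMod (6 * n))) :
    clawCol n h (.leaf i j) ≠ clawCol n h (.circ m) := by
  have e : ZMod.castHom h (ZMod 2) m = ((i : ℕ) : ZMod 2) := by
    rcases hm with rfl | rfl
    · rw [map_add, map_mul, map_natCast, map_natCast, map_natCast, h2]; ring
    · rw [map_add, map_add, map_mul, map_natCast, map_natCast, map_natCast, map_natCast,
        Nat.cast_mul, h2]; ring
  change ((i : ℕ) : ZMod 2) + 1 ≠ ZMod.castHom h (ZMod 2) m
  rw [e]
  exact (zmod2_ne _).symm

theorem colorable_of_rel {V : Type} (r : V → V → Prop) (c : V → ZMod 2)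
    (hc : ∀ a b, r a b → c a ≠ c b) : (SimpleGraph.fromRel r).Colorable 2 := by
  refine ⟨SimpleGraph.Coloring.mk (fun v => (c v : Fin 2)) ?_⟩
  intro a b hab
  rw [SimpleGraph.fromRel_adj] at hab
  rcases hab.2 with h | h
  · exact hc _ _ h
  · exact (hc _ _ h).symm

/-- For every even `n ≥ 2`, both `CG(n)` and `CG'(n)` are bipartite. -/
theorem claw_bipartite_of_even (n : ℕ) (hn : 2 ≤ n) (heven : Even n) :
    (CG n).Colorable 2 ∧ (CG' n).Colorable 2 := by
  have h : 2 ∣ 6 * n := ⟨3 * n, by ring⟩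
  have hd : 2 ∣ n := heven.two_dvd
  have h2 : ((n : ℕ) : ZMod 2) = 0 := (ZMod.natCast_eq_zero_iff n 2).2 hd
  have hcl : ∀ (i i' : Fin n) (j : Fin 3), i = i' →
      clawCol n h (.centre i) ≠ clawCol n h (.leaf i' j) := by
    rintro i _ j rfl
    exact zmod2_ne _
  haveI : NeZero (6 * n) := ⟨by omega⟩
  constructor
  · refine colorable_of_rel _ (clawCol n h) ?_
    rintro (m | ⟨i, j⟩ | i) (m' | ⟨i', j'⟩ | i') hr <;> try exact hr.elim
    · change m' = m + 1 at hr
      subst hr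
      change ZMod.castHom h (ZMod 2) m ≠ ZMod.castHom h (ZMod 2) (m + 1)
      rw [map_add, map_one]
      exact zmod2_ne _
    · exact claw_leaf_ne n h h2 i j m' hr
    · exact hcl i i' j' hr
  · refine colorable_of_rel _ (clawCol n h) ?_
    rintro (m | ⟨i, j⟩ | i) (m' | ⟨i', j'⟩ | i') hr <;> try exact hr.elim
    · have hr2 : m'.val % (3 * n) = (m.val % (3 * n) + 1) % (3 * n) := hr.2
      have d3 : 2 ∣ 3 * n := Dvd.dvd.mul_left hd 3
      have e := congrArg (· % 2) hr2
      simp only [Nat.mod_mod_of_dvd _ d3] at e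
      have e2 := Nat.mod_mod_of_dvd m.val d3
      change ZMod.castHom h (ZMod 2) m ≠ ZMod.castHom h (ZMod 2) m'
      rw [← ZMod.natCast_zmod_val m, ← ZMod.natCast_zmod_val m', map_natCast, map_natCast]
      intro hq
      have hq' := (ZMod.natCast_eq_natCast_iff' _ _ _).1 hq
      omega
    · exact claw_leaf_ne n h h2 i j m' hr
    · exact hcl i i' j' hr
end

section
/- For every odd natural number n ≥ 1, there exists a non-trivial TF-isomorphism (α, β) from the companion CG'(n) to the claw graph CG(n) (bijections of the common vertex set with: x, y adjacent in CG'(n) iff α(x), β(y) adjacent in CG(n), and α ≠ β) such that every claw vertex is a pin, i.e., α and β both fix every centre c_i and every leaf ℓ_{i,j}, and each circuit vertex u_m is sent by each of α and β to either u_m or u_{m + 3n} (indices in ZMod (6n)). In particular, for odd n the graphs CG(n) and CG'(n) are TF-isomorphic. -/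
theorem val_half (n : ℕ) (hn : 1 ≤ n) (m : ZMod (6 * n)) :
    (m + ((3 * n : ℕ) : ZMod (6 * n))).val =
      if m.val < 3 * n then m.val + 3 * n else m.val - 3 * n := by
  have : NeZero (6 * n) := ⟨by omega⟩
  have h := ZMod.val_lt m
  rw [ZMod.val_add, ZMod.val_natCast, Nat.mod_eq_of_lt (show 3 * n < 6 * n by omega)]
  split_ifs with h1
  · exact Nat.mod_eq_of_lt (by omega)
  · rw [Nat.mod_eq_sub_mod (by omega), Nat.mod_eq_of_lt (by omega)]; omega

theorem val_one_step (n : ℕ) (hn : 1 ≤ n) (m : ZMod (6 * n)) :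
    (m + 1).val = if m.val + 1 = 6 * n then 0 else m.val + 1 := by
  have : NeZero (6 * n) := ⟨by omega⟩
  have h := ZMod.val_lt m
  have h1 : (1 : ZMod (6 * n)) = ((1 : ℕ) : ZMod (6 * n)) := by simp
  rw [h1, ZMod.val_add, ZMod.val_natCast, Nat.mod_eq_of_lt (show 1 < 6 * n by omega)]
  split_ifs with h2
  · rw [h2, Nat.mod_self]
  · exact Nat.mod_eq_of_lt (by omega)

theorem mod_half (N x : ℕ) (h : x < 2 * N) : x % N = if x < N then x else x - N := by
  split_ifs with h1
  · exact Nat.mod_eq_of_lt h1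
  · rw [Nat.mod_eq_sub_mod (by omega), Nat.mod_eq_of_lt (by omega)]

theorem div_half (N x : ℕ) (h : x < 2 * N) : x / N = if x < N then 0 else 1 := by
  split_ifs with h1
  · exact Nat.div_eq_of_lt h1
  · exact Nat.div_eq_of_lt_le (by omega) (by omega)

/-- Flip the antipodal pair of `m` according to the parity of `m.val % 3n`. -/
def flipC (n p : ℕ) (m : ZMod (6 * n)) : ZMod (6 * n) :=
  if (m.val % (3 * n) + p) % 2 = 1 then m + ((3 * n : ℕ) : ZMod (6 * n)) else m

theorem half_half (n : ℕ) (m : ZMod (6 * n)) :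
    m + ((3 * n : ℕ) : ZMod (6 * n)) + ((3 * n : ℕ) : ZMod (6 * n)) = m := by
  have : ((3 * n : ℕ) : ZMod (6 * n)) + ((3 * n : ℕ) : ZMod (6 * n)) = 0 := by
    rw [← Nat.cast_add, show 3 * n + 3 * n = 6 * n by ring, ZMod.natCast_self]
  rw [add_assoc, this, add_zero]

theorem flipC_or (n p : ℕ) (m : ZMod (6 * n)) :
    flipC n p m = m ∨ flipC n p m = m + ((3 * n : ℕ) : ZMod (6 * n)) := by
  unfold flipC; split_ifs <;> simp

theorem flipC_val (n : ℕ) (hn : 1 ≤ n) (p : ℕ) (m : ZMod (6 * n)) :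
    (flipC n p m).val =
      if ((if m.val < 3 * n then m.val else m.val - 3 * n) + p) % 2 = 1 then
        (if m.val < 3 * n then m.val + 3 * n else m.val - 3 * n) else m.val := by
  have : NeZero (6 * n) := ⟨by omega⟩
  have h := ZMod.val_lt m
  unfold flipC
  rw [mod_half (3 * n) m.val (by omega)]
  rw [← val_half n hn]
  exact apply_ite ZMod.val _ _ _

theorem flipC_invol (n : ℕ) (hn : 1 ≤ n) (p : ℕ) : Function.Involutive (flipC n p) := by
  intro m
  have : NeZero (6 * n) := ⟨by omega⟩
  have h := ZMod.val_lt m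
  apply ZMod.val_injective
  rw [flipC_val n hn p (flipC n p m), flipC_val n hn p m]
  split_ifs <;> omega

theorem rel_circ (n : ℕ) (hn : 1 ≤ n) (hodd : Odd n) (p q : ℕ) (hpq : p + q = 1)
    (m m' : ZMod (6 * n)) :
    cgRel' n (.circ m) (.circ m') ↔ flipC n q m' = flipC n p m + 1 := by
  have : NeZero (6 * n) := ⟨by omega⟩
  have h := ZMod.val_lt m
  have h' := ZMod.val_lt m'
  obtain ⟨k, hk⟩ := hodd
  rw [← (ZMod.val_injective (6 * n)).eq_iff, val_one_step n hn, flipC_val n hn, flipC_val n hn]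
  simp only [cgRel']
  have hb : m.val % (3 * n) < 3 * n := Nat.mod_lt _ (by omega)
  rw [mod_half (3 * n) (m.val % (3 * n) + 1) (by omega), mod_half (3 * n) m.val (by omega),
    mod_half (3 * n) m'.val (by omega), div_half (3 * n) m.val (by omega),
    div_half (3 * n) m'.val (by omega)]
  generalize m.val = x at *
  generalize m'.val = y at *
  clear hb
  obtain ⟨rfl, rfl⟩ | ⟨rfl, rfl⟩ : (p = 0 ∧ q = 1) ∨ (p = 1 ∧ q = 0) := by omega
  all_goals
    by_cases hx : x < 3 * n <;> by_cases hy : y < 3 * n <;> simp only [hx, hy, if_true, if_false]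
      <;> simp only [true_and, false_and, false_iff, zero_ne_one, one_ne_zero] <;> split_ifs <;> omega

theorem flipC_ne (n : ℕ) (hn : 1 ≤ n) (p q : ℕ)
    (m m' : ZMod (6 * n)) (h : flipC n q m' = flipC n p m + 1) : flipC n p m ≠ flipC n q m' := by
  have : NeZero (6 * n) := ⟨by omega⟩
  intro e
  rw [← e] at h
  have h2 := congrArg ZMod.val h
  rw [val_one_step n hn] at h2
  split_ifs at h2 <;> omega

theorem rel_ne (n : ℕ) (hn : 1 ≤ n) (m m' : ZMod (6 * n))
    (h : cgRel' n (.circ m) (.circ m')) : m ≠ m' := by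
  rintro rfl
  have hb : m.val % (3 * n) < 3 * n := Nat.mod_lt _ (by omega)
  have h2 := h.2
  rw [mod_half (3 * n) (m.val % (3 * n) + 1) (by omega)] at h2
  split_ifs at h2 <;> omega

/-- Extend a permutation of the circuit by the identity on the claws. -/
def extP (n : ℕ) (σ : ZMod (6 * n) → ZMod (6 * n)) : ClawVert n → ClawVert n
  | .circ m => .circ (σ m)
  | .leaf i j => .leaf i j
  | .centre i => .centre i

theorem extP_invol (n : ℕ) (σ : ZMod (6 * n) → ZMod (6 * n)) (h : Function.Involutive σ) :
    Function.Involutive (extP n σ) := by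
  intro x
  cases x <;> simp [extP, h _]

theorem leaf_flip (n p : ℕ) (i : Fin n) (j : Fin 3) (m : ZMod (6 * n)) :
    cgRel' n (.leaf i j) (.circ m) ↔ cgRel n (.leaf i j) (.circ (flipC n p m)) := by
  simp only [cgRel, cgRel']
  generalize ((i : ℕ) : ZMod (6 * n)) + ((j : ℕ) : ZMod (6 * n)) * ((n : ℕ) : ZMod (6 * n)) = c
  rcases flipC_or n p m with h | h <;> rw [h]
  constructor
  · rintro (rfl | rfl)
    · right; rfl
    · left; exact half_half n c
  · rintro (h | h)
    · right; rw [← h, half_half]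
    · left; exact add_right_cancel h

theorem adj_main (n : ℕ) (hn : 1 ≤ n) (hodd : Odd n) (x y : ClawVert n) :
    (CG' n).Adj x y ↔ (CG n).Adj (extP n (flipC n 0) x) (extP n (flipC n 1) y) := by
  simp only [CG, CG', SimpleGraph.fromRel_adj]
  cases x with
  | circ m =>
    cases y with
    | circ m' =>
      have h1 := rel_circ n hn hodd 0 1 rfl m m'
      have h2 := rel_circ n hn hodd 1 0 rfl m' m
      have h3 := rel_ne n hn m m'
      have h4 := rel_ne n hn m' m
      have h5 := flipC_ne n hn 0 1 m m'
      have h6 := flipC_ne n hn 1 0 m' m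
      simp only [extP, ne_eq, ClawVert.circ.injEq]
      rw [show cgRel n (.circ (flipC n 0 m)) (.circ (flipC n 1 m')) ↔
        flipC n 1 m' = flipC n 0 m + 1 from Iff.rfl,
        show cgRel n (.circ (flipC n 1 m')) (.circ (flipC n 0 m)) ↔
        flipC n 0 m = flipC n 1 m' + 1 from Iff.rfl, ← h1, ← h2]
      rw [← h1] at h5
      rw [← h2] at h6
      constructor
      · rintro ⟨_, h | h⟩
        · exact ⟨h5 h, Or.inl h⟩
        · exact ⟨(h6 h).symm, Or.inr h⟩
      · rintro ⟨_, h | h⟩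
        · exact ⟨h3 h, Or.inl h⟩
        · exact ⟨(h4 h).symm, Or.inr h⟩
    | leaf i j =>
      have := leaf_flip n 0 i j m
      simp only [extP]
      rw [this]
      simp [cgRel, cgRel']
    | centre i => simp [extP, cgRel, cgRel']
  | leaf i j =>
    cases y with
    | circ m =>
      have := leaf_flip n 1 i j m
      simp only [extP]
      rw [this]
      simp [cgRel, cgRel']
    | leaf i j => simp [extP, cgRel, cgRel']
    | centre i => simp [extP, cgRel, cgRel']
  | centre i => cases y <;> simp [extP, cgRel, cgRel']

/-- For odd `n ≥ 1`, there is a non-trivial TF-isomorphism `(α, β)` from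
`CG'(n)` to `CG(n)` in which every claw vertex (centre or leaf) is a pin and
each circuit vertex `u_m` is sent by each of `α`, `β` to `u_m` or `u_{m+3n}`.
In particular `CG(n)` and `CG'(n)` are TF-isomorphic for odd `n`. -/
theorem claw_tf_isomorphism_of_odd (n : ℕ) (hn : 1 ≤ n) (hodd : Odd n) :
    ∃ α β : ClawVert n ≃ ClawVert n,
      (∀ x y : ClawVert n, (CG' n).Adj x y ↔ (CG n).Adj (α x) (β y)) ∧
      α ≠ β ∧
      (∀ i : Fin n, α (.centre i) = .centre i ∧ β (.centre i) = .centre i) ∧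
      (∀ (i : Fin n) (j : Fin 3), α (.leaf i j) = .leaf i j ∧ β (.leaf i j) = .leaf i j) ∧
      (∀ m : ZMod (6 * n),
        (α (.circ m) = .circ m ∨ α (.circ m) = .circ (m + ((3 * n : ℕ) : ZMod (6 * n)))) ∧
        (β (.circ m) = .circ m ∨ β (.circ m) = .circ (m + ((3 * n : ℕ) : ZMod (6 * n))))) := by
  have : NeZero (6 * n) := ⟨by omega⟩
  refine ⟨(extP_invol n _ (flipC_invol n hn 0)).toPerm, (extP_invol n _ (flipC_invol n hn 1)).toPerm,
    adj_main n hn hodd, ?_, fun i => ⟨rfl, rfl⟩, fun i j => ⟨rfl, rfl⟩, fun m => ⟨?_, ?_⟩⟩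
  · intro h
    have h1 : extP n (flipC n 0) (.circ 0) = extP n (flipC n 1) (.circ 0) :=
      congrArg (fun e : ClawVert n ≃ ClawVert n => e (.circ 0)) h
    simp only [extP, ClawVert.circ.injEq] at h1
    have h2 := congrArg ZMod.val h1
    rw [flipC_val n hn, flipC_val n hn, ZMod.val_zero] at h2
    split_ifs at h2 <;> omega
  · exact (flipC_or n 0 m).imp (congrArg ClawVert.circ) (congrArg ClawVert.circ)
  · exact (flipC_or n 1 m).imp (congrArg ClawVert.circ) (congrArg ClawVert.circ)
end

section
/- Let k ≥ 3 be an odd natural number. For every natural number n ≥ 1, the generalized claw graph CG_k(n) and its companion CG'_k(n) are TF-cousins if and only if n is odd: there exist bijections α, β between the vertex sets such that x, y are adjacent in CG'_k(n) iff α(x), β(y) are adjacent in CG_k(n), and CG_k(n) and CG'_k(n) are not isomorphic, if and only if n is odd. -/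
/-- Vertices of the generalized claw graph `CG_k(n)`: circuit vertices indexed
by `ZMod (2kn)`, leaves indexed by `Fin n × Fin k`, and centres by `Fin n`. -/
inductive ClawVertK (k n : ℕ) : Type
  | circ : ZMod (2 * k * n) → ClawVertK k n
  | leaf : Fin n → Fin k → ClawVertK k n
  | centre : Fin n → ClawVertK k n
  deriving DecidableEq

/-- Edge relation (before symmetrization) for `CG_k(n)`: a cycle `C_{2kn}` on
the circuit vertices, claw edges `c_i ~ ℓ_{i,j}`, and leaf `ℓ_{i,j}` joined to
the antipodal pair `u_{i+jn}`, `u_{i+jn+kn}`. -/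
def cgRelK (k n : ℕ) : ClawVertK k n → ClawVertK k n → Prop
  | .circ m, .circ m' => m' = m + 1
  | .centre i, .leaf i' _ => i = i'
  | .leaf i j, .circ m =>
      m = ((i : ℕ) : ZMod (2 * k * n)) + ((j : ℕ) : ZMod (2 * k * n)) * ((n : ℕ) : ZMod (2 * k * n)) ∨
      m = ((i : ℕ) : ZMod (2 * k * n)) + ((j : ℕ) : ZMod (2 * k * n)) * ((n : ℕ) : ZMod (2 * k * n))
            + ((k * n : ℕ) : ZMod (2 * k * n))
  | _, _ => False

/-- The generalized claw graph `CG_k(n)`. -/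
def CGk (k n : ℕ) : SimpleGraph (ClawVertK k n) := SimpleGraph.fromRel (cgRelK k n)

/-- Edge relation (before symmetrization) for the companion `CG'_k(n)`: the
circuit is replaced by two disjoint copies of `C_{kn}`: writing a circuit index
as `s·kn + a` with `0 ≤ a < kn`, `u_{s·kn+a} ~ u_{s'·kn+a'}` iff `s = s'` and
`a' ≡ a ± 1 (mod kn)`. -/
def cgRelK' (k n : ℕ) : ClawVertK k n → ClawVertK k n → Prop
  | .circ m, .circ m' =>
      m.val / (k * n) = m'.val / (k * n) ∧
      m'.val % (k * n) = (m.val % (k * n) + 1) % (k * n)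
  | .centre i, .leaf i' _ => i = i'
  | .leaf i j, .circ m =>
      m = ((i : ℕ) : ZMod (2 * k * n)) + ((j : ℕ) : ZMod (2 * k * n)) * ((n : ℕ) : ZMod (2 * k * n)) ∨
      m = ((i : ℕ) : ZMod (2 * k * n)) + ((j : ℕ) : ZMod (2 * k * n)) * ((n : ℕ) : ZMod (2 * k * n))
            + ((k * n : ℕ) : ZMod (2 * k * n))
  | _, _ => False

/-- The companion generalized claw graph `CG'_k(n)`. -/
def CGk' (k n : ℕ) : SimpleGraph (ClawVertK k n) := SimpleGraph.fromRel (cgRelK' k n)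

namespace ClawAux

variable {k n : ℕ}

/-- the half-turn constant -/
def tt (k n : ℕ) : ZMod (2 * k * n) := ((k * n : ℕ) : ZMod (2 * k * n))

lemma tt_add : tt k n + tt k n = 0 := by
  have : ((2 * k * n : ℕ) : ZMod (2 * k * n)) = 0 := ZMod.natCast_self _
  rw [← this, tt]; push_cast; ring

lemma add_tt_tt (m : ZMod (2 * k * n)) : m + tt k n + tt k n = m := by
  rw [add_assoc, tt_add, add_zero]

lemma add_tt_eq (m p : ZMod (2 * k * n)) : m + tt k n = p ↔ m = p + tt k n := by
  constructor
  · rintro rfl; rw [add_tt_tt]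
  · rintro rfl; rw [add_tt_tt]

/-- successor relation in the companion -/
def R' (k n : ℕ) (m m' : ZMod (2 * k * n)) : Prop :=
  m.val / (k * n) = m'.val / (k * n) ∧ m'.val % (k * n) = (m.val % (k * n) + 1) % (k * n)

lemma one_ne (hk : 3 ≤ k) (hn : 1 ≤ n) : (1 : ZMod (2 * k * n)) ≠ 0 := by
  have h : 3 ≤ k * n := by nlinarith
  have : Fact (1 < 2 * k * n) := ⟨by rw [mul_assoc]; omega⟩
  exact one_ne_zero

lemma two_ne (hk : 3 ≤ k) (hn : 1 ≤ n) : (1 : ZMod (2 * k * n)) + 1 ≠ 0 := by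
  have h : 3 ≤ k * n := by nlinarith
  intro h2
  have h3 : ((2 : ℕ) : ZMod (2 * k * n)) = 0 := by rw [← h2]; norm_num
  rw [ZMod.natCast_eq_zero_iff] at h3
  have := Nat.le_of_dvd (by norm_num) h3
  rw [mul_assoc] at this
  omega

lemma adj_cc (hk : 3 ≤ k) (hn : 1 ≤ n) (m m' : ZMod (2 * k * n)) :
    (CGk k n).Adj (.circ m) (.circ m') ↔ (m' = m + 1 ∨ m = m' + 1) := by
  have := one_ne hk hn
  simp only [CGk, SimpleGraph.fromRel_adj, cgRelK, ne_eq, ClawVertK.circ.injEq]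
  constructor
  · exact fun h => h.2
  · intro h
    refine ⟨?_, h⟩
    rintro rfl
    simp at h
    exact this h

lemma adj_cc' (hk : 3 ≤ k) (hn : 1 ≤ n) (m m' : ZMod (2 * k * n)) :
    (CGk' k n).Adj (.circ m) (.circ m') ↔ (R' k n m m' ∨ R' k n m' m) := by
  have h3 : 3 ≤ k * n := by nlinarith
  simp only [CGk', SimpleGraph.fromRel_adj, cgRelK', ne_eq, ClawVertK.circ.injEq, R']
  constructor
  · exact fun h => h.2
  · intro h
    refine ⟨?_, h⟩
    rintro rfl
    have h1 : m.val % (k * n) = (m.val % (k * n) + 1) % (k * n) := by tauto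
    have h2 : m.val % (k * n) < k * n := Nat.mod_lt _ (by omega)
    rcases Nat.lt_or_ge (m.val % (k * n) + 1) (k * n) with h4 | h4
    · rw [Nat.mod_eq_of_lt h4] at h1; omega
    · have h5 : m.val % (k * n) + 1 = k * n := by omega
      rw [h5, Nat.mod_self] at h1; omega

/-- leaf position -/
def pos (i : Fin n) (j : Fin k) : ZMod (2 * k * n) :=
  ((i : ℕ) : ZMod (2 * k * n)) + ((j : ℕ) : ZMod (2 * k * n)) * ((n : ℕ) : ZMod (2 * k * n))

lemma adj_lc (i : Fin n) (j : Fin k) (m : ZMod (2 * k * n)) :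
    (CGk k n).Adj (.leaf i j) (.circ m) ↔ (m = pos i j ∨ m = pos i j + tt k n) := by
  simp [CGk, SimpleGraph.fromRel_adj, cgRelK, pos, tt]

lemma adj_lc' (i : Fin n) (j : Fin k) (m : ZMod (2 * k * n)) :
    (CGk' k n).Adj (.leaf i j) (.circ m) ↔ (m = pos i j ∨ m = pos i j + tt k n) := by
  simp [CGk', SimpleGraph.fromRel_adj, cgRelK', pos, tt]

lemma adj_cl (i : Fin n) (j : Fin k) (m : ZMod (2 * k * n)) :
    (CGk k n).Adj (.circ m) (.leaf i j) ↔ (m = pos i j ∨ m = pos i j + tt k n) := by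
  rw [SimpleGraph.adj_comm, adj_lc]

lemma adj_cl' (i : Fin n) (j : Fin k) (m : ZMod (2 * k * n)) :
    (CGk' k n).Adj (.circ m) (.leaf i j) ↔ (m = pos i j ∨ m = pos i j + tt k n) := by
  rw [SimpleGraph.adj_comm, adj_lc']

lemma adj_same (x y : ClawVertK k n) (h : (∀ m, x ≠ .circ m) ∨ (∀ m, y ≠ .circ m))
    (h2 : (∀ m, x ≠ .circ m) ∨ ∀ i j, y ≠ .leaf i j)
    (h3 : (∀ m, y ≠ .circ m) ∨ ∀ i j, x ≠ .leaf i j) :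
    (CGk' k n).Adj x y ↔ (CGk k n).Adj x y := by
  cases x <;> cases y <;> simp [CGk, CGk', SimpleGraph.fromRel_adj, cgRelK, cgRelK'] at *

/-! Even case -/

/-- parity map -/
def chi (k n : ℕ) : ZMod (2 * k * n) →+* ZMod 2 :=
  ZMod.castHom (by rw [mul_assoc]; exact dvd_mul_right _ _) (ZMod 2)

/-- colouring -/
def col : ClawVertK k n → ZMod 2
  | .circ m => chi k n m
  | .leaf i _ => ((i : ℕ) : ZMod 2) + 1
  | .centre i => ((i : ℕ) : ZMod 2)

lemma z2 (a : ZMod 2) : a + 1 + 1 = a := by revert a; decide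

lemma chi_pos (he : Even n) (i : Fin n) (j : Fin k) : chi k n (pos i j) = ((i : ℕ) : ZMod 2) := by
  simp [pos, (ZMod.natCast_eq_zero_iff_even).2 he]

lemma chi_tt_even (he : Even n) : chi k n (tt k n) = 0 := by
  simp [tt, (ZMod.natCast_eq_zero_iff_even).2 he]

lemma chi_val [NeZero (2 * k * n)] (m : ZMod (2 * k * n)) : chi k n m = (m.val : ZMod 2) := by
  conv_lhs => rw [← ZMod.natCast_zmod_val m]
  rw [map_natCast]

lemma chi_R' [NeZero (2 * k * n)] (he : Even n) {m m' : ZMod (2 * k * n)} (h : R' k n m m') :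
    chi k n m' = chi k n m + 1 := by
  obtain ⟨-, h⟩ := h
  have hd : 2 ∣ k * n := (he.two_dvd).mul_left k
  have h2 := congrArg (· % 2) h
  simp only [Nat.mod_mod_of_dvd _ hd] at h2
  have h3 : (m.val % (k * n) + 1) % 2 = (m.val + 1) % 2 := by
    have := Nat.mod_mod_of_dvd m.val hd
    omega
  rw [h3] at h2
  rw [chi_val, chi_val]
  have := (ZMod.natCast_eq_natCast_iff' m'.val (m.val + 1) 2).2 h2
  rw [this]; push_cast; rfl

lemma col_adj (hk : 3 ≤ k) (hn : 1 ≤ n) (he : Even n) {x y : ClawVertK k n}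
    (h : (CGk k n).Adj x y) : col y = col x + 1 := by
  cases x <;> cases y
  · rw [adj_cc hk hn] at h
    rcases h with rfl | rfl <;> simp [col, z2]
  · rw [adj_cl] at h
    rcases h with rfl | rfl <;> simp [col, chi_pos he, chi_tt_even he]
  · simp [CGk, SimpleGraph.fromRel_adj, cgRelK] at h
  · rw [adj_lc] at h
    rcases h with rfl | rfl <;> simp [col, chi_pos he, chi_tt_even he, z2]
  · simp [CGk, SimpleGraph.fromRel_adj, cgRelK] at h
  · simp [CGk, SimpleGraph.fromRel_adj, cgRelK] at h
    subst h; simp [col, z2]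
  · simp [CGk, SimpleGraph.fromRel_adj, cgRelK] at h
  · simp [CGk, SimpleGraph.fromRel_adj, cgRelK] at h
    subst h; simp [col]
  · simp [CGk, SimpleGraph.fromRel_adj, cgRelK] at h

lemma col_adj' (hk : 3 ≤ k) (hn : 1 ≤ n) (he : Even n) {x y : ClawVertK k n}
    (h : (CGk' k n).Adj x y) : col y = col x + 1 := by
  have : NeZero (2 * k * n) := ⟨by positivity⟩
  have key := fun h => col_adj hk hn he (x := x) (y := y) h
  cases x <;> cases y
  · rw [adj_cc' hk hn] at h
    rcases h with h | h
    · simpa [col] using chi_R' he h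
    · have := chi_R' he h
      simp [col, this, z2]
  · exact key ((adj_cl _ _ _).2 ((adj_cl' _ _ _).1 h))
  · exact key ((adj_same _ _ (by simp) (by simp) (by simp)).1 h)
  · exact key ((adj_lc _ _ _).2 ((adj_lc' _ _ _).1 h))
  all_goals exact key ((adj_same _ _ (by simp) (by simp) (by simp)).1 h)

lemma const_of_adj (hk : 3 ≤ k) (hn : 1 ≤ n) (F : ClawVertK k n → ZMod 2)
    (hF : ∀ x y, (CGk k n).Adj x y → F x = F y) (x : ClawVertK k n) : F x = F (.circ 0) := by
  have : NeZero (2 * k * n) := ⟨by positivity⟩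
  have h1 : ∀ j : ℕ, F (.circ (j : ZMod (2 * k * n))) = F (.circ 0) := by
    intro j
    induction j with
    | zero => simp
    | succ j ih =>
      rw [← ih]
      symm
      apply hF
      rw [adj_cc hk hn]; left; push_cast; rfl
  have h2 : ∀ m, F (.circ m) = F (.circ 0) := by
    intro m
    rw [← ZMod.natCast_zmod_val m]; exact h1 _
  have h3 : ∀ i j, F (.leaf i j) = F (.circ 0) := by
    intro i j
    rw [← h2 (pos i j)]
    apply hF; rw [adj_lc]; left; rfl
  cases x with
  | circ m => exact h2 m
  | leaf i j => exact h3 i j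
  | centre i =>
    rw [← h3 i ⟨0, by omega⟩]
    apply hF
    simp [CGk, SimpleGraph.fromRel_adj, cgRelK]

lemma finiteV (hk : 3 ≤ k) (hn : 1 ≤ n) : Finite (ClawVertK k n) := by
  have : NeZero (2 * k * n) := ⟨by positivity⟩
  let f : ClawVertK k n → ZMod (2 * k * n) ⊕ (Fin n × Fin k) ⊕ Fin n := fun x => match x with
    | .circ m => .inl m
    | .leaf i j => .inr (.inl (i, j))
    | .centre i => .inr (.inr i)
  apply Finite.of_injective f
  intro x y h
  cases x <;> cases y <;> simp_all [f]

lemma even_iso (hk : 3 ≤ k) (hn : 1 ≤ n) (he : Even n)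
    (a b : ClawVertK k n ≃ ClawVertK k n)
    (hab : ∀ x y, (CGk k n).Adj x y ↔ (CGk' k n).Adj (a x) (b y)) :
    Nonempty (CGk k n ≃g CGk' k n) := by
  classical
  have := finiteV hk hn
  have z01 : ∀ c : ZMod 2, c = 0 ∨ c = 1 := by decide
  have z10 : (1 : ZMod 2) ≠ 0 := by decide
  let φ : ClawVertK k n → ClawVertK k n := fun x => if col x = 0 then a x else b x
  have φ0 : ∀ x, col x = 0 → φ x = a x := fun x h => by simp [φ, h]
  have φ1 : ∀ x, col x = 1 → φ x = b x := fun x h => by simp [φ, h]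
  have main : ∀ x y, col y = col x + 1 → ((CGk' k n).Adj (φ x) (φ y) ↔ (CGk k n).Adj x y) := by
    intro x y h
    rcases z01 (col x) with h0 | h0
    · rw [h0, zero_add] at h
      rw [φ0 x h0, φ1 y h, hab]
    · rw [h0, show (1 : ZMod 2) + 1 = 0 by decide] at h
      rw [φ1 x h0, φ0 y h, SimpleGraph.adj_comm, ← hab, SimpleGraph.adj_comm]
  have hF := const_of_adj hk hn (fun x => col (φ x) + col x) (by
    intro x y h
    have hc := col_adj hk hn he h
    have h' := col_adj' hk hn he ((main x y hc).2 h)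
    simp only [hc, h']
    generalize col (φ x) = u
    generalize col x = v
    revert u v; decide)
  have hs : ∀ x y, (col (φ x) = col (φ y) ↔ col x = col y) := by
    intro x y
    have : col (φ x) + col x = col (φ y) + col y := (hF x).trans (hF y).symm
    revert this
    generalize col (φ x) = u
    generalize col x = v
    generalize col (φ y) = u'
    generalize col y = v'
    revert u v u' v'; decide
  have inj : Function.Injective φ := by
    intro x y h
    have hc := (hs x y).1 (by rw [h])
    rcases z01 (col x) with h0 | h0
    · rw [φ0 x h0, φ0 y (hc ▸ h0)] at h; exact a.injective h
    · rw [φ1 x h0, φ1 y (hc ▸ h0)] at h; exact b.injective h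
  refine ⟨⟨Equiv.ofBijective φ (Finite.injective_iff_bijective.1 inj), ?_⟩⟩
  intro x y
  change (CGk' k n).Adj (φ x) (φ y) ↔ _
  have z : ∀ u v : ZMod 2, v = u ∨ v = u + 1 := by decide
  have zz : ∀ u : ZMod 2, u ≠ u + 1 := by decide
  rcases z (col x) (col y) with h | h
  · constructor
    · intro h'
      have := col_adj' hk hn he h'
      rw [(hs x y).2 h.symm] at this
      exact absurd this (zz _)
    · intro h'
      have := col_adj hk hn he h'
      rw [h] at this
      exact absurd this (zz _)
  · exact main x y h

/-! Odd case -/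

/-- the half turn -/
def T : ClawVertK k n → ClawVertK k n
  | .circ m => .circ (m + tt k n)
  | .leaf i j => .leaf i j
  | .centre i => .centre i

lemma T_T (x : ClawVertK k n) : T (T x) = x := by
  cases x <;> simp [T, add_tt_tt]

/-- the half turn as an equivalence -/
def TE : ClawVertK k n ≃ ClawVertK k n := ⟨T, T, T_T, T_T⟩

/-- twist on the circuit -/
def al (m : ZMod (2 * k * n)) : ZMod (2 * k * n) :=
  if Even (m.val % (k * n)) then m else m + tt k n

lemma val_tt (hk : 3 ≤ k) (hn : 1 ≤ n) (m : ZMod (2 * k * n)) :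
    (m + tt k n).val % (k * n) = m.val % (k * n) := by
  have : NeZero (2 * k * n) := ⟨by positivity⟩
  have hd : k * n ∣ 2 * k * n := by rw [mul_assoc]; exact dvd_mul_left _ _
  rw [ZMod.val_add, Nat.mod_mod_of_dvd _ hd, tt, ZMod.val_natCast, Nat.add_mod,
    Nat.mod_mod_of_dvd _ hd]
  simp

lemma al_tt (hk : 3 ≤ k) (hn : 1 ≤ n) (m : ZMod (2 * k * n)) :
    al (m + tt k n) = al m + tt k n := by
  simp only [al, val_tt hk hn]; split_ifs <;> rfl

lemma al_al (hk : 3 ≤ k) (hn : 1 ≤ n) (m : ZMod (2 * k * n)) : al (al m) = m := by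
  by_cases h : Even (m.val % (k * n))
  · simp [al, h]
  · have : al m = m + tt k n := by simp [al, h]
    rw [this, al_tt hk hn, this, add_tt_tt]

/-- twist -/
def A : ClawVertK k n → ClawVertK k n
  | .circ m => .circ (al m)
  | .leaf i j => .leaf i j
  | .centre i => .centre i

lemma A_A (hk : 3 ≤ k) (hn : 1 ≤ n) (x : ClawVertK k n) : A (A x) = x := by
  cases x <;> simp [A, al_al hk hn]

lemma A_T (hk : 3 ≤ k) (hn : 1 ≤ n) (x : ClawVertK k n) : A (T x) = T (A x) := by
  cases x <;> simp [A, T, al_tt hk hn]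

/-- twist as an equivalence -/
def AE (hk : 3 ≤ k) (hn : 1 ≤ n) : ClawVertK k n ≃ ClawVertK k n :=
  ⟨A, A, A_A hk hn, A_A hk hn⟩

lemma R'_fwd (hk : 3 ≤ k) (hn : 1 ≤ n) (ho : Odd (k * n)) {m m' : ZMod (2 * k * n)}
    (h : R' k n m m') : al m' = al m + tt k n + 1 := by
  have : NeZero (2 * k * n) := ⟨by positivity⟩
  obtain ⟨h1, h2⟩ := h
  have hv := Nat.div_add_mod m.val (k * n)
  have hv' := Nat.div_add_mod m'.val (k * n)
  rw [← h1] at hv'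
  have hlt : m.val % (k * n) < k * n := Nat.mod_lt _ (by positivity)
  rcases Nat.lt_or_ge (m.val % (k * n) + 1) (k * n) with h4 | h4
  · rw [Nat.mod_eq_of_lt h4] at h2
    have hm : m' = m + 1 := by
      have : m'.val = m.val + 1 := by omega
      rw [← ZMod.natCast_zmod_val m', this, Nat.cast_add, ZMod.natCast_zmod_val, Nat.cast_one]
    unfold al
    rw [h2]
    by_cases he : Even (m.val % (k * n))
    · have : ¬ Even (m.val % (k * n) + 1) := by simpa [Nat.even_add_one] using he
      rw [if_neg this, if_pos he, hm]; ring
    · have : Even (m.val % (k * n) + 1) := by simpa [Nat.even_add_one] using he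
      rw [if_pos this, if_neg he, hm, add_tt_tt]
  · have h5 : m.val % (k * n) + 1 = k * n := by omega
    rw [h5, Nat.mod_self] at h2
    have hm : m' + tt k n = m + 1 := by
      have : m'.val + k * n = m.val + 1 := by omega
      have := congrArg (Nat.cast : ℕ → ZMod (2 * k * n)) this
      rw [Nat.cast_add, ZMod.natCast_zmod_val, Nat.cast_add, ZMod.natCast_zmod_val,
        Nat.cast_one] at this
      exact this
    have he : Even (m.val % (k * n)) := by
      rw [← h5] at ho
      by_contra hc
      rw [Nat.not_even_iff_odd] at hc
      have := hc.add_one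
      rw [← Nat.not_odd_iff_even] at this
      exact this ho
    unfold al
    rw [h2, if_pos (by simp), if_pos he]
    rw [add_tt_eq] at hm
    rw [hm]; ring

lemma R'_exists (hk : 3 ≤ k) (hn : 1 ≤ n) (m : ZMod (2 * k * n)) : ∃ m', R' k n m m' := by
  have : NeZero (2 * k * n) := ⟨by positivity⟩
  have hN : 0 < k * n := by positivity
  have hr : (m.val % (k * n) + 1) % (k * n) < k * n := Nat.mod_lt _ hN
  have hq : m.val / (k * n) < 2 := by
    rw [Nat.div_lt_iff_lt_mul hN, ← mul_assoc]; exact ZMod.val_lt m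
  refine ⟨((k * n * (m.val / (k * n)) + (m.val % (k * n) + 1) % (k * n) : ℕ) :
    ZMod (2 * k * n)), ?_⟩
  unfold R'
  rw [ZMod.val_natCast_of_lt]
  · constructor
    · rw [Nat.mul_add_div hN, Nat.div_eq_of_lt hr, add_zero]
    · rw [Nat.mul_add_mod, Nat.mod_mod]
  · have : k * n * (m.val / (k * n)) ≤ k * n * 1 := Nat.mul_le_mul_left _ (by omega)
    have h2 : 2 * k * n = 2 * (k * n) := mul_assoc _ _ _
    omega

lemma al_inj (hk : 3 ≤ k) (hn : 1 ≤ n) {m m' : ZMod (2 * k * n)} (h : al m = al m') : m = m' := by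
  rw [← al_al hk hn m, h, al_al hk hn]

lemma R'_iff (hk : 3 ≤ k) (hn : 1 ≤ n) (ho : Odd (k * n)) (m m' : ZMod (2 * k * n)) :
    R' k n m m' ↔ al m' = al m + tt k n + 1 := by
  refine ⟨R'_fwd hk hn ho, fun h => ?_⟩
  obtain ⟨m'', h''⟩ := R'_exists hk hn m
  have := R'_fwd hk hn ho h''
  rw [← h] at this
  rwa [← al_inj hk hn this]

lemma al_leaf (m p : ZMod (2 * k * n)) :
    (al m = p ∨ al m = p + tt k n) ↔ (m = p ∨ m = p + tt k n) := by
  unfold al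
  split_ifs
  · rfl
  · rw [add_tt_eq, add_tt_eq, add_tt_tt]; tauto

lemma T_leaf (m p : ZMod (2 * k * n)) :
    (m + tt k n = p ∨ m + tt k n = p + tt k n) ↔ (m = p ∨ m = p + tt k n) := by
  rw [add_tt_eq, add_tt_eq, add_tt_tt]; tauto

lemma tf (hk : 3 ≤ k) (hn : 1 ≤ n) (ho : Odd (k * n)) (x y : ClawVertK k n) :
    (CGk' k n).Adj x y ↔ (CGk k n).Adj (A x) (T (A y)) := by
  cases x <;> cases y <;> simp only [A, T]
  · rename_i m m'
    rw [adj_cc' hk hn, adj_cc hk hn, R'_iff hk hn ho, R'_iff hk hn ho, add_tt_eq]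
    apply or_congr
    · rw [add_right_comm]
    · rfl
  · rw [adj_cl', adj_cl, al_leaf]
  · simp [CGk, CGk', SimpleGraph.fromRel_adj, cgRelK, cgRelK']
  · rw [adj_lc', adj_lc, T_leaf, al_leaf]
  all_goals simp [CGk, CGk', SimpleGraph.fromRel_adj, cgRelK, cgRelK']

lemma T_aut (hk : 3 ≤ k) (hn : 1 ≤ n) (x y : ClawVertK k n) :
    (CGk k n).Adj (T x) (T y) ↔ (CGk k n).Adj x y := by
  cases x <;> cases y <;> simp only [T]
  · rename_i m m'
    rw [adj_cc hk hn, adj_cc hk hn, add_right_comm m, add_right_comm m', add_left_inj,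
      add_left_inj]
  · rw [adj_cl, adj_cl, T_leaf]
  · simp [CGk, SimpleGraph.fromRel_adj, cgRelK]
  · rw [adj_lc, adj_lc, T_leaf]
  · simp [CGk, SimpleGraph.fromRel_adj, cgRelK]

open Classical in
/-- neighbour sum -/
noncomputable def nsum {V : Type} [Fintype V] (G : SimpleGraph V) (f : V → ℝ) (x : V) : ℝ :=
  ∑ y, if G.Adj x y then f y else 0

/-- eigenspace of 2 -/
noncomputable def K {V : Type} [Fintype V] (G : SimpleGraph V) : Submodule ℝ (V → ℝ) where
  carrier := {f | ∀ x, nsum G f x = 2 * f x}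
  add_mem' := by
    intro f g hf hg x
    have h1 := hf x
    have h2 := hg x
    simp only [nsum] at *
    rw [Pi.add_apply, mul_add, ← h1, ← h2, ← Finset.sum_add_distrib]
    apply Finset.sum_congr rfl
    intro y _
    split_ifs <;> simp
  zero_mem' := by intro x; simp [nsum]
  smul_mem' := by
    intro c f hf x
    have h1 := hf x
    simp only [nsum] at *
    rw [Pi.smul_apply, smul_eq_mul, mul_left_comm, ← h1, Finset.mul_sum]
    apply Finset.sum_congr rfl
    intro y _
    split_ifs <;> simp

lemma mem_K {V : Type} [Fintype V] (G : SimpleGraph V) (f : V → ℝ) :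
    f ∈ K G ↔ ∀ x, nsum G f x = 2 * f x := Iff.rfl

/-- change of variables in neighbour sums -/
lemma nsum_tf {V : Type} [Fintype V] (G H : SimpleGraph V) (a b : V ≃ V)
    (h : ∀ x y, G.Adj x y ↔ H.Adj (a x) (b y)) (f : V → ℝ) (x : V) :
    nsum G (fun y => f (b y)) x = nsum H f (a x) := by
  classical
  unfold nsum
  rw [← Equiv.sum_comp b (fun z => if H.Adj (a x) z then f z else 0)]
  apply Finset.sum_congr rfl
  intro y _
  simp only [h]

lemma nsum_neg {V : Type} [Fintype V] (G : SimpleGraph V) (f : V → ℝ) (x : V) :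
    nsum G (fun y => - f y) x = - nsum G f x := by
  unfold nsum
  rw [← Finset.sum_neg_distrib]
  apply Finset.sum_congr rfl
  intro y _
  split_ifs <;> simp

lemma nsum_T [Fintype (ClawVertK k n)] (hk : 3 ≤ k) (hn : 1 ≤ n) (f : ClawVertK k n → ℝ)
    (x : ClawVertK k n) : nsum (CGk k n) (fun y => f (T y)) x = nsum (CGk k n) f (T x) :=
  nsum_tf _ _ TE TE (fun x y => (T_aut hk hn x y).symm) f x

lemma nsum_fix [Fintype (ClawVertK k n)] (hk : 3 ≤ k) (hn : 1 ≤ n) (f : ClawVertK k n → ℝ)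
    (hf : ∀ x, f (T x) = - f x) (x : ClawVertK k n) (hx : T x = x) :
    nsum (CGk k n) f x = 0 := by
  have h := nsum_T hk hn f x
  simp only [hf, hx] at h
  rw [nsum_neg] at h
  linarith

lemma f_fix (f : ClawVertK k n → ℝ)
    (hf : ∀ x, f (T x) = - f x) (x : ClawVertK k n) (hx : T x = x) : f x = 0 := by
  have h := hf x
  rw [hx] at h; linarith

lemma nsum_circ [Fintype (ClawVertK k n)] (hk : 3 ≤ k) (hn : 1 ≤ n) (f : ClawVertK k n → ℝ)
    (hf : ∀ x, f (T x) = - f x) (m : ZMod (2 * k * n)) :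
    nsum (CGk k n) f (.circ m) = f (.circ (m + 1)) + f (.circ (m - 1)) := by
  classical
  have hne : (ClawVertK.circ (m + 1) : ClawVertK k n) ≠ .circ (m - 1) := by
    intro h
    rw [ClawVertK.circ.injEq] at h
    apply two_ne hk hn
    linear_combination h
  unfold nsum
  rw [← Finset.sum_subset (Finset.subset_univ
    ({.circ (m + 1), .circ (m - 1)} : Finset (ClawVertK k n)))]
  · rw [Finset.sum_pair hne, if_pos, if_pos]
    · rw [adj_cc hk hn]; right; ring
    · rw [adj_cc hk hn]; left; rfl
  · intro y _ hy
    cases y with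
    | circ m' =>
      rw [if_neg]
      rw [adj_cc hk hn]
      rintro (rfl | rfl) <;> simp at hy
    | leaf i j => rw [f_fix f hf _ rfl]; simp
    | centre i => rw [f_fix f hf _ rfl]; simp

lemma anti_zero [Fintype (ClawVertK k n)] (hk : 3 ≤ k) (hn : 1 ≤ n) (g : ClawVertK k n → ℝ)
    (hg : g ∈ K (CGk k n)) (hT : ∀ x, g (T x) = - g x) (x : ClawVertK k n) : g x = 0 := by
  have : NeZero (2 * k * n) := ⟨by positivity⟩
  have hrec : ∀ m, g (.circ (m + 1)) + g (.circ (m - 1)) = 2 * g (.circ m) := by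
    intro m
    rw [← nsum_circ hk hn g hT, hg]
  set d := g (.circ 1) - g (.circ 0) with hd
  have hj : ∀ j : ℕ, g (.circ (j : ZMod (2 * k * n))) = g (.circ 0) + j * d ∧
      g (.circ ((j : ZMod (2 * k * n)) + 1)) = g (.circ 0) + (j + 1) * d := by
    intro j
    induction j with
    | zero => simp [hd]
    | succ j ih =>
      obtain ⟨h1, h2⟩ := ih
      have := hrec (j + 1)
      rw [add_sub_cancel_right] at this
      push_cast
      refine ⟨h2, ?_⟩
      linarith
  have hd0 : d = 0 := by
    have := (hj (2 * k * n)).1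
    rw [ZMod.natCast_self] at this
    have h2 : ((2 * k * n : ℕ) : ℝ) ≠ 0 := Nat.cast_ne_zero.2 (NeZero.ne _)
    have h3 : ((2 * k * n : ℕ) : ℝ) * d = 0 := by linarith
    exact (mul_eq_zero.1 h3).resolve_left h2
  have hc : ∀ m, g (.circ m) = g (.circ 0) := by
    intro m
    have := (hj m.val).1
    rw [ZMod.natCast_zmod_val, hd0, mul_zero, add_zero] at this
    exact this
  cases x with
  | circ m =>
    have h := hT (.circ m)
    simp only [T] at h
    rw [hc, hc m] at h
    rw [hc]; linarith
  | leaf i j => exact f_fix g hT _ rfl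
  | centre i => exact f_fix g hT _ rfl

lemma K_symm [Fintype (ClawVertK k n)] (hk : 3 ≤ k) (hn : 1 ≤ n) (f : ClawVertK k n → ℝ)
    (hf : f ∈ K (CGk k n)) (x : ClawVertK k n) : f (T x) = f x := by
  have hfT : (fun y => f (T y)) ∈ K (CGk k n) := by
    intro x
    rw [nsum_T hk hn, hf]
  have := anti_zero hk hn _ (Submodule.sub_mem _ hfT hf) (by
    intro x
    simp only [Pi.sub_apply, T_T]; ring) x
  simp only [Pi.sub_apply] at this
  linarith

lemma K_map [Fintype (ClawVertK k n)] (hk : 3 ≤ k) (hn : 1 ≤ n) (ho : Odd (k * n))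
    (f : ClawVertK k n → ℝ) (hf : f ∈ K (CGk k n)) : (fun y => f (A y)) ∈ K (CGk' k n) := by
  intro x
  have h := nsum_tf (CGk' k n) (CGk k n) (AE hk hn) ((AE hk hn).trans TE)
    (fun x y => tf hk hn ho x y) f x
  have e : (fun y => f (((AE hk hn).trans TE) y)) = fun y => f (A y) := by
    funext y
    exact K_symm hk hn f hf (A y)
  rw [e] at h
  rw [h, hf]; rfl

/-- sign of parity -/
noncomputable def sg (a : ZMod 2) : ℝ := if a = 0 then 1 else -1

lemma sg_add (a : ZMod 2) : sg (a + 1) = - sg a := by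
  have : ∀ a : ZMod 2, a = 0 ∨ a = 1 := by decide
  rcases this a with rfl | rfl
  · simp [sg]
  · rw [show (1 : ZMod 2) + 1 = 0 by decide]; simp [sg]

/-- alternating function -/
noncomputable def hh : ClawVertK k n → ℝ
  | .circ m => sg (chi k n m)
  | _ => 0

lemma chi_tt (ho : Odd (k * n)) : chi k n (tt k n) = 1 := by
  rw [tt, map_natCast]
  exact (ZMod.natCast_eq_one_iff_odd).2 ho

lemma hh_T (ho : Odd (k * n)) (x : ClawVertK k n) : hh (T x) = - hh x := by
  cases x <;> simp [T, hh, chi_tt ho, sg_add]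

lemma hh_sum [Fintype (ClawVertK k n)] (hk : 3 ≤ k) (hn : 1 ≤ n) (ho : Odd (k * n))
    (x : ClawVertK k n) : nsum (CGk k n) hh x = -2 * hh x := by
  cases x with
  | circ m =>
    rw [nsum_circ hk hn _ (hh_T ho)]
    have h1 : sg (chi k n (m - 1)) = - sg (chi k n m) := by
      have := sg_add (chi k n (m - 1))
      rw [map_sub, map_one, sub_add_cancel] at this
      rw [map_sub, map_one]; linarith
    simp only [hh, h1, map_add, map_one, sg_add]; ring
  | leaf i j => rw [nsum_fix hk hn _ (hh_T ho) _ rfl]; simp [hh]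
  | centre i => rw [nsum_fix hk hn _ (hh_T ho) _ rfl]; simp [hh]

lemma hh_mem [Fintype (ClawVertK k n)] (hk : 3 ≤ k) (hn : 1 ≤ n) (ho : Odd (k * n)) :
    (fun y => hh (A y)) ∈ K (CGk' k n) := by
  intro x
  have h := nsum_tf (CGk' k n) (CGk k n) (AE hk hn) ((AE hk hn).trans TE)
    (fun x y => tf hk hn ho x y) hh x
  have e : (fun y => hh (((AE hk hn).trans TE) y)) = fun y => - hh (A y) := by
    funext y
    exact hh_T ho (A y)
  rw [e, nsum_neg, hh_sum hk hn ho] at h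
  change - nsum (CGk' k n) (fun y => hh (A y)) x = -2 * hh (A x) at h
  linarith

lemma not_iso (hk : 3 ≤ k) (hn : 1 ≤ n) (ho : Odd (k * n)) : IsEmpty (CGk k n ≃g CGk' k n) := by
  classical
  have := finiteV hk hn
  let : Fintype (ClawVertK k n) := Fintype.ofFinite _
  refine ⟨fun φ => ?_⟩
  let ι : K (CGk k n) →ₗ[ℝ] K (CGk' k n) :=
    { toFun := fun f => ⟨fun y => f.1 (A y), K_map hk hn ho f.1 f.2⟩
      map_add' := fun _ _ => rfl
      map_smul' := fun _ _ => rfl }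
  let ψ : K (CGk' k n) →ₗ[ℝ] K (CGk k n) :=
    { toFun := fun f => ⟨fun y => f.1 (φ y), by
        intro x
        have := nsum_tf (CGk k n) (CGk' k n) φ.toEquiv φ.toEquiv
          (fun x y => φ.map_rel_iff.symm) f.1 x
        exact this.trans (f.2 _)⟩
      map_add' := fun _ _ => rfl
      map_smul' := fun _ _ => rfl }
  have ψinj : Function.Injective ψ := by
    intro f g h
    apply Subtype.ext
    funext y
    have := congrFun (congrArg Subtype.val h) (φ.symm y)
    simpa [ψ] using this
  have ιinj : Function.Injective ι := by
    intro f g h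
    apply Subtype.ext
    funext y
    have := congrFun (congrArg Subtype.val h) (A y)
    simpa [ι, A_A hk hn] using this
  have hfin : Module.finrank ℝ (K (CGk k n)) = Module.finrank ℝ (K (CGk' k n)) :=
    le_antisymm (LinearMap.finrank_le_finrank_of_injective ιinj)
      (LinearMap.finrank_le_finrank_of_injective ψinj)
  have surj := (LinearMap.injective_iff_surjective_of_finrank_eq_finrank hfin).1 ιinj
  obtain ⟨f, hf⟩ := surj ⟨_, hh_mem hk hn ho⟩
  have hfe : ∀ y, f.1 y = hh y := by
    intro y
    have := congrFun (congrArg Subtype.val hf) (A y)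
    simpa [ι, A_A hk hn] using this
  have h1 := K_symm hk hn f.1 f.2 (.circ 0)
  rw [hfe, hfe, hh_T ho] at h1
  simp [hh, sg] at h1
  norm_num at h1

end ClawAux

/-- For odd `k ≥ 3` and `n ≥ 1`, the generalized claw graph `CG_k(n)` and its
companion `CG'_k(n)` are TF-cousins iff `n` is odd. -/
theorem generalized_claw_tf_cousins_iff_odd (k n : ℕ) (hk : 3 ≤ k) (hkodd : Odd k)
    (hn : 1 ≤ n) :
    ((∃ α β : ClawVertK k n ≃ ClawVertK k n,
        ∀ x y : ClawVertK k n, (CGk' k n).Adj x y ↔ (CGk k n).Adj (α x) (β y)) ∧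
      IsEmpty (CGk k n ≃g CGk' k n)) ↔ Odd n := by
  constructor
  · rintro ⟨⟨a, b, hab⟩, hemp⟩
    by_contra hodd
    rw [Nat.not_odd_iff_even] at hodd
    obtain ⟨e⟩ := ClawAux.even_iso hk hn hodd a.symm b.symm (by
      intro x y
      rw [hab]; simp)
    exact hemp.false e
  · intro hodd
    have ho : Odd (k * n) := hkodd.mul hodd
    exact ⟨⟨ClawAux.AE hk hn, (ClawAux.AE hk hn).trans ClawAux.TE, ClawAux.tf hk hn ho⟩,
      ClawAux.not_iso hk hn ho⟩
end
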